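/- arXiv:math/0510191 — 8 statements merged into one kernel-verified Lean document; each statement's English description precedes it below -/
import Mathlib

section
/- Let H be a real Hilbert space and let Ψ : H → ℝ be Fréchet differentiable with gradient ∇Ψ : H → H Lipschitz with constant k, where 0 ≤ k < 2. Then the functional u ↦ ‖u‖² + Ψ(u) is strictly convex on H. -/
/-- A function on a real Hilbert space whose gradient is strictly monotone is strictly convex. -/
theorem strictConvexOn_univ_of_inner_gradient_sub_pos
    {H : Type*} [NormedAddCommGroup H] [InnerProductSpace ℝ H] [CompleteSpace H]
    {f : H → ℝ} {f' : H → H} (hf : ∀ u, HasGradientAt f (f' u) u)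
    (hmono : ∀ u v, u ≠ v → 0 < inner ℝ (f' u - f' v) (u - v)) :
    StrictConvexOn ℝ Set.univ f := by
  refine ⟨convex_univ, fun x _ y _ hxy a b ha hb hab => ?_⟩
  have hderiv (t : ℝ) : HasDerivAt (fun t : ℝ => f (x + t • (y - x)))
      (inner ℝ (f' (x + t • (y - x))) (y - x)) t := by
    have hline : HasDerivAt (fun t : ℝ => x + t • (y - x)) (y - x) t := by
      simpa using ((hasDerivAt_id t).smul_const (y - x)).const_add x
    exact (hf (x + t • (y - x))).hasFDerivAt.comp_hasDerivAt t hline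
  have hstrict : StrictMono (deriv fun t : ℝ => f (x + t • (y - x))) := by
    intro s t hst
    rw [(hderiv s).deriv, (hderiv t).deriv]
    have hsub : x + t • (y - x) - (x + s • (y - x)) = (t - s) • (y - x) := by module
    have hne : x + t • (y - x) ≠ x + s • (y - x) := by
      rw [← sub_ne_zero, hsub]
      exact smul_ne_zero (sub_ne_zero.2 hst.ne') (sub_ne_zero.2 hxy.symm)
    have hpos := hmono _ _ hne
    rw [hsub, real_inner_smul_right, inner_sub_left] at hpos
    exact sub_pos.1 ((mul_pos_iff_of_pos_left (sub_pos.2 hst)).1 hpos)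
  have hcont : Continuous fun t : ℝ => f (x + t • (y - x)) :=
    continuous_iff_continuousAt.2 fun t => (hderiv t).continuousAt
  have hconv := (hstrict.strictConvexOn_univ_of_deriv hcont).2 (Set.mem_univ 0) (Set.mem_univ 1)
    zero_ne_one ha hb hab
  have hpoint : x + b • (y - x) = a • x + b • y := by
    rw [eq_sub_of_add_eq hab]
    module
  simpa [hpoint] using hconv

/-- The gradient of the squared norm at `u` is `2 • u`. -/
theorem hasGradientAt_norm_sq
    {H : Type*} [NormedAddCommGroup H] [InnerProductSpace ℝ H] [CompleteSpace H] (u : H) :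
    HasGradientAt (fun u : H => ‖u‖ ^ 2) ((2 : ℝ) • u) u := by
  rw [hasGradientAt_iff_hasFDerivAt]
  have hdual : InnerProductSpace.toDual ℝ H ((2 : ℝ) • u) = 2 • innerSL ℝ u := by
    ext v
    simp
  rw [hdual]
  exact (hasStrictFDerivAt_norm_sq u).hasFDerivAt

theorem strictConvexOn_norm_sq_add
    {H : Type*} [NormedAddCommGroup H] [InnerProductSpace ℝ H] [CompleteSpace H]
    (Ψ : H → ℝ) (Ψ' : H → H) (k : ℝ) (hk₀ : 0 ≤ k) (hk₂ : k < 2)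
    (hgrad : ∀ u, HasGradientAt Ψ (Ψ' u) u)
    (hlip : ∀ u v, ‖Ψ' u - Ψ' v‖ ≤ k * ‖u - v‖) :
    StrictConvexOn ℝ Set.univ (fun u : H => ‖u‖ ^ 2 + Ψ u) := by
  refine strictConvexOn_univ_of_inner_gradient_sub_pos (f' := fun u => (2 : ℝ) • u + Ψ' u)
    (fun u => ?_) fun u v huv => ?_
  · rw [hasGradientAt_iff_hasFDerivAt, map_add]
    exact (hasGradientAt_norm_sq u).hasFDerivAt.add (hgrad u).hasFDerivAt
  · have hsub : (2 : ℝ) • u + Ψ' u - ((2 : ℝ) • v + Ψ' v) =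
        (2 : ℝ) • (u - v) + (Ψ' u - Ψ' v) := by module
    have hpos : 0 < ‖u - v‖ := norm_sub_pos_iff.2 huv
    have hinner := neg_le_of_abs_le (abs_real_inner_le_norm (Ψ' u - Ψ' v) (u - v))
    have hmul := mul_le_mul_of_nonneg_right (hlip u v) hpos.le
    rw [hsub, inner_add_left, real_inner_smul_left, real_inner_self_eq_norm_sq]
    nlinarith [mul_pos (sub_pos.2 hk₂) (pow_pos hpos 2)]
end

section
/- Let H be a real Hilbert space and let Ψ : H → ℝ be Fréchet differentiable with gradient ∇Ψ : H → H Lipschitz with constant k, where 0 ≤ k < 2. Then the functional u ↦ ‖u‖² + Ψ(u) is coercive: it tends to +∞ as ‖u‖ → +∞. -/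
/-- A function whose gradient is `k`-Lipschitz lies above its quadratic lower model. -/
theorem add_inner_sub_le_of_lipschitz_gradient
    {H : Type*} [NormedAddCommGroup H] [InnerProductSpace ℝ H] [CompleteSpace H]
    {Ψ : H → ℝ} {Ψ' : H → H} {k : ℝ}
    (hgrad : ∀ u, HasGradientAt Ψ (Ψ' u) u)
    (hlip : ∀ u v, ‖Ψ' u - Ψ' v‖ ≤ k * ‖u - v‖) (x d : H) :
    Ψ x + inner ℝ (Ψ' x) d - k / 2 * ‖d‖ ^ 2 ≤ Ψ (x + d) := by
  have hderiv (t : ℝ) : HasDerivAt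
      (fun t : ℝ => Ψ (x + t • d) - t * inner ℝ (Ψ' x) d + k / 2 * ‖d‖ ^ 2 * t ^ 2)
      (inner ℝ (Ψ' (x + t • d) - Ψ' x) d + k * ‖d‖ ^ 2 * t) t := by
    have hline : HasDerivAt (fun t : ℝ => x + t • d) d t := by
      simpa using ((hasDerivAt_id t).smul_const d).const_add x
    have hΨ := (hgrad (x + t • d)).hasFDerivAt.comp_hasDerivAt t hline
    have hlin := (hasDerivAt_id t).mul_const (inner ℝ (Ψ' x) d)
    have hsq := ((hasDerivAt_id t).pow 2).const_mul (k / 2 * ‖d‖ ^ 2)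
    refine ((hΨ.sub hlin).add hsq).congr_deriv ?_
    simp only [InnerProductSpace.toDual_apply_apply, inner_sub_left, id]
    push_cast
    ring
  have hmono := monotoneOn_of_deriv_nonneg (convex_Ici (0 : ℝ))
    (fun t _ => (hderiv t).continuousAt.continuousWithinAt)
    (fun t _ => (hderiv t).differentiableAt.differentiableWithinAt)
    (fun t ht => by
      rw [interior_Ici, Set.mem_Ioi] at ht
      rw [(hderiv t).deriv]
      have hnorm : ‖Ψ' (x + t • d) - Ψ' x‖ ≤ k * (t * ‖d‖) := by
        simpa [norm_smul, abs_of_pos ht] using hlip (x + t • d) x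
      have hinner := (abs_le.mp (abs_real_inner_le_norm (Ψ' (x + t • d) - Ψ' x) d)).1
      have hmul := mul_le_mul_of_nonneg_right hnorm (norm_nonneg d)
      linarith)
  have h := hmono (Set.mem_Ici.mpr le_rfl) (Set.mem_Ici.mpr zero_le_one) zero_le_one
  simp only [zero_smul, add_zero, one_smul] at h
  linarith

theorem coercive_norm_sq_add
    {H : Type*} [NormedAddCommGroup H] [InnerProductSpace ℝ H] [CompleteSpace H]
    (Ψ : H → ℝ) (Ψ' : H → H) (k : ℝ) (hk₀ : 0 ≤ k) (hk₂ : k < 2)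
    (hgrad : ∀ u, HasGradientAt Ψ (Ψ' u) u)
    (hlip : ∀ u v, ‖Ψ' u - Ψ' v‖ ≤ k * ‖u - v‖) :
    ∀ M : ℝ, ∃ R : ℝ, ∀ u : H, R ≤ ‖u‖ → M ≤ ‖u‖ ^ 2 + Ψ u := by
  intro M
  have hc : 0 < 1 - k / 2 := by linarith
  refine ⟨max 1 ((‖Ψ' 0‖ + |M - Ψ 0|) / (1 - k / 2)), fun u hu => ?_⟩
  obtain ⟨hu₁, hu₂⟩ := max_le_iff.mp hu
  rw [div_le_iff₀ hc] at hu₂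
  have hlower := add_inner_sub_le_of_lipschitz_gradient hgrad hlip 0 u
  rw [zero_add] at hlower
  have hinner := (abs_le.mp (abs_real_inner_le_norm (Ψ' 0) u)).1
  have hmul := mul_le_mul_of_nonneg_right hu₂ (norm_nonneg u)
  have habs := le_mul_of_one_le_right (abs_nonneg (M - Ψ 0)) hu₁
  linarith [le_abs_self (M - Ψ 0)]
end

section
/- Let H be a real Hilbert space, V a closed linear subspace of H, and I, J : H → ℝ Fréchet differentiable functionals whose gradients ∇I and ∇J are Lipschitz with constants ν and L respectively, where 0 ≤ ν < 2 and L > 0. Assume I(u) ≥ 0 for all u ∈ H and I(0) = 0. Let S be the set of global minima over V of the functional u ↦ ‖u‖² + I(u) + ((2 − ν)/L) J(u). Then S is a closed convex subset of H, and if S is nonempty there exists a unique û ∈ S such that ‖û‖² + I(û) = inf_{u ∈ S} (‖u‖² + I(u)). -/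
/-- A function with `L`-Lipschitz gradient lies above its tangents up to a quadratic error. -/
theorem inner_gradient_sub_le_of_lipschitz
    {H : Type*} [NormedAddCommGroup H] [InnerProductSpace ℝ H] [CompleteSpace H]
    {f : H → ℝ} {f' : H → H} {L : ℝ}
    (hgrad : ∀ u, HasGradientAt f (f' u) u)
    (hlip : ∀ u v, ‖f' u - f' v‖ ≤ L * ‖u - v‖) (x z : H) :
    f z + inner ℝ (f' z) (x - z) - L / 2 * ‖x - z‖ ^ 2 ≤ f x := by
  set d := x - z with hd
  let φ : ℝ → ℝ := fun t => f (z + t • d) - t * inner ℝ (f' z) d + L / 2 * ‖d‖ ^ 2 * t ^ 2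
  have hφ (t : ℝ) : HasDerivAt φ
      (inner ℝ (f' (z + t • d)) d - inner ℝ (f' z) d + L * ‖d‖ ^ 2 * t) t := by
    have hline : HasDerivAt (fun t : ℝ => z + t • d) d t := by
      simpa using ((hasDerivAt_id t).smul_const d).const_add z
    have hf := (hgrad (z + t • d)).hasFDerivAt.comp_hasDerivAt t hline
    have hlin := (hasDerivAt_id t).mul_const (inner ℝ (f' z) d)
    have hsq := ((hasDerivAt_id t).pow 2).const_mul (L / 2 * ‖d‖ ^ 2)
    refine ((hf.sub hlin).add hsq).congr_deriv ?_
    simp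
    ring
  have hmono : MonotoneOn φ (Set.Icc 0 1) := by
    refine monotoneOn_of_deriv_nonneg (convex_Icc 0 1)
      (fun t _ => (hφ t).continuousAt.continuousWithinAt)
      (fun t _ => (hφ t).differentiableAt.differentiableWithinAt) fun t ht => ?_
    rw [interior_Icc] at ht
    have hlip_t : ‖f' (z + t • d) - f' z‖ ≤ L * (t * ‖d‖) := by
      simpa [norm_smul, abs_of_pos ht.1] using hlip (z + t • d) z
    have hcs := neg_le_of_abs_le (abs_real_inner_le_norm (f' (z + t • d) - f' z) d)
    rw [inner_sub_left] at hcs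
    rw [(hφ t).deriv]
    nlinarith [mul_le_mul_of_nonneg_right hlip_t (norm_nonneg d)]
  have h01 := hmono (Set.left_mem_Icc.2 zero_le_one) (Set.right_mem_Icc.2 zero_le_one) zero_le_one
  simp only [φ, zero_smul, add_zero, one_smul, hd, add_sub_cancel] at h01
  linarith

theorem norm_sq_convex_combination
    {H : Type*} [NormedAddCommGroup H] [InnerProductSpace ℝ H] (x y : H) {a b : ℝ}
    (hab : a + b = 1) :
    ‖a • x + b • y‖ ^ 2 = a * ‖x‖ ^ 2 + b * ‖y‖ ^ 2 - a * b * ‖x - y‖ ^ 2 := by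
  obtain rfl : b = 1 - a := by linarith
  rw [norm_add_sq_real, norm_sub_sq_real, norm_smul, norm_smul, mul_pow, mul_pow,
    inner_smul_left, inner_smul_right]
  simp only [Real.norm_eq_abs, sq_abs, conj_trivial]
  ring

theorem strongConvexOn_norm_sq
    {H : Type*} [NormedAddCommGroup H] [InnerProductSpace ℝ H] :
    StrongConvexOn Set.univ 2 fun u : H => ‖u‖ ^ 2 := by
  refine ⟨convex_univ, fun x _ y _ a b _ _ hab => ?_⟩
  simp only [norm_sq_convex_combination x y hab, smul_eq_mul]
  exact le_of_eq (by ring)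

/-- A function with `L`-Lipschitz gradient is strongly convex with (negative) modulus `-L`. -/
theorem strongConvexOn_neg_of_lipschitz_gradient
    {H : Type*} [NormedAddCommGroup H] [InnerProductSpace ℝ H] [CompleteSpace H]
    {f : H → ℝ} {f' : H → H} {L : ℝ}
    (hgrad : ∀ u, HasGradientAt f (f' u) u)
    (hlip : ∀ u v, ‖f' u - f' v‖ ≤ L * ‖u - v‖) :
    StrongConvexOn Set.univ (-L) f := by
  refine ⟨convex_univ, fun x _ y _ a b ha hb hab => ?_⟩
  set z := a • x + b • y with hz
  have hx := mul_le_mul_of_nonneg_left (inner_gradient_sub_le_of_lipschitz hgrad hlip x z) ha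
  have hy := mul_le_mul_of_nonneg_left (inner_gradient_sub_le_of_lipschitz hgrad hlip y z) hb
  have hcenter : a • (x - z) + b • (y - z) = 0 := by
    rw [smul_sub, smul_sub, sub_add_sub_comm, ← add_smul, hab, one_smul, ← hz, sub_self]
  have hinner : a * inner ℝ (f' z) (x - z) + b * inner ℝ (f' z) (y - z) = 0 := by
    rw [← inner_smul_right, ← inner_smul_right, ← inner_add_right, hcenter, inner_zero_right]
  have hnorm := norm_sq_convex_combination (x - z) (y - z) hab
  rw [hcenter, norm_zero, sub_sub_sub_cancel_right] at hnorm
  have hfz : a * f z + b * f z = f z := by rw [← add_mul, hab, one_mul]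
  simp only [smul_eq_mul]
  linear_combination hx + hy - hinner - hfz - L / 2 * hnorm

/-- A continuous strongly convex function bounded below attains its infimum at exactly one point
of a nonempty closed set. -/
theorem StrongConvexOn.existsUnique_eq_sInf
    {H : Type*} [NormedAddCommGroup H] [NormedSpace ℝ H] [CompleteSpace H]
    {s : Set H} {g : H → ℝ} {m : ℝ} (hg : StrongConvexOn s m g) (hm : 0 < m)
    (hcont : Continuous g) (hbdd : BddBelow (g '' s)) (hclosed : IsClosed s)
    (hne : s.Nonempty) :
    ∃! u, u ∈ s ∧ g u = sInf (g '' s) := by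
  set i := sInf (g '' s)
  have hle {u : H} (hu : u ∈ s) : i ≤ g u := csInf_le hbdd (Set.mem_image_of_mem g hu)
  have hdist {x y : H} (hx : x ∈ s) (hy : y ∈ s) {ε : ℝ} (hxε : g x ≤ i + ε)
      (hyε : g y ≤ i + ε) : ‖x - y‖ ^ 2 ≤ 8 / m * ε := by
    have ha : (0 : ℝ) ≤ 1 / 2 := by norm_num
    have hab : (1 / 2 : ℝ) + 1 / 2 = 1 := by norm_num
    have hmid := hg.2 hx hy ha ha hab
    have hlow := hle (hg.1 hx hy ha ha hab)
    simp only [smul_eq_mul] at hmid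
    rw [div_mul_eq_mul_div, le_div_iff₀ hm]
    linarith
  have hseq (n : ℕ) : ∃ u ∈ s, g u ≤ i + 1 / ((n : ℝ) + 1) := by
    obtain ⟨_, ⟨u, hu, rfl⟩, hlt⟩ := exists_lt_of_csInf_lt (hne.image g)
      (lt_add_of_pos_right i (Nat.one_div_pos_of_nat (α := ℝ) (n := n)))
    exact ⟨u, hu, hlt.le⟩
  choose u hus hu using hseq
  have hcauchy : CauchySeq u := by
    refine cauchySeq_of_le_tendsto_0 (fun n : ℕ => √(8 / m * (1 / ((n : ℝ) + 1)))) ?_ ?_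
    · intro n k N hn hk
      rw [dist_eq_norm]
      exact Real.le_sqrt_of_sq_le <| hdist (hus n) (hus k)
        ((hu n).trans <| by gcongr) ((hu k).trans <| by gcongr)
    · simpa using
        ((tendsto_one_div_add_atTop_nhds_zero_nat (𝕜 := ℝ)).const_mul (8 / m)).sqrt
  obtain ⟨w, hw⟩ := cauchySeq_tendsto_of_complete hcauchy
  have hws : w ∈ s := hclosed.mem_of_tendsto hw (Filter.Eventually.of_forall hus)
  have hgw : g w ≤ i := by
    refine le_of_tendsto_of_tendsto' ((hcont.tendsto w).comp hw) ?_ hu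
    simpa using (tendsto_one_div_add_atTop_nhds_zero_nat (𝕜 := ℝ)).const_add i
  refine ⟨w, ⟨hws, le_antisymm hgw (hle hws)⟩, fun v ⟨hvs, hv⟩ => ?_⟩
  have hvw := hdist hvs hws (ε := 0) (by linarith) (by linarith)
  rw [mul_zero] at hvw
  exact sub_eq_zero.1 (norm_eq_zero.1 (pow_eq_zero_iff two_ne_zero |>.1
    (le_antisymm hvw (sq_nonneg _))))

theorem minima_set_closed_convex_and_unique_nearest
    {H : Type*} [NormedAddCommGroup H] [InnerProductSpace ℝ H] [CompleteSpace H]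
    (V : Submodule ℝ H) (hV : IsClosed (V : Set H))
    (I J : H → ℝ) (I' J' : H → H) (ν L : ℝ)
    (hν₀ : 0 ≤ ν) (hν₂ : ν < 2) (hL : 0 < L)
    (hIgrad : ∀ u, HasGradientAt I (I' u) u)
    (hJgrad : ∀ u, HasGradientAt J (J' u) u)
    (hIlip : ∀ u v, ‖I' u - I' v‖ ≤ ν * ‖u - v‖)
    (hJlip : ∀ u v, ‖J' u - J' v‖ ≤ L * ‖u - v‖)
    (hInonneg : ∀ u, 0 ≤ I u) (hI0 : I 0 = 0)
    (S : Set H)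
    (hS : S = {u : H | u ∈ V ∧ ∀ v ∈ V,
      ‖u‖ ^ 2 + I u + ((2 - ν) / L) * J u ≤ ‖v‖ ^ 2 + I v + ((2 - ν) / L) * J v}) :
    Convex ℝ S ∧ IsClosed S ∧
      (S.Nonempty → ∃! uhat, uhat ∈ S ∧
        ‖uhat‖ ^ 2 + I uhat = sInf ((fun u : H => ‖u‖ ^ 2 + I u) '' S)) := by
  have hIcont : Continuous I :=
    continuous_iff_continuousAt.2 fun u => (hIgrad u).hasFDerivAt.continuousAt
  have hJcont : Continuous J :=
    continuous_iff_continuousAt.2 fun u => (hJgrad u).hasFDerivAt.continuousAt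
  have hIconv := strongConvexOn_neg_of_lipschitz_gradient hIgrad hIlip
  have hJconv := strongConvexOn_neg_of_lipschitz_gradient hJgrad hJlip
  set c := (2 - ν) / L
  have hc₀ : 0 ≤ c := div_nonneg (by linarith) hL.le
  have hcL : c * L = 2 - ν := div_mul_cancel₀ _ hL.ne'
  have hG : StrongConvexOn Set.univ (2 - ν) fun u : H => ‖u‖ ^ 2 + I u := by
    refine ⟨convex_univ, fun x hx y hy a b ha hb hab => ?_⟩
    have hn := strongConvexOn_norm_sq.2 hx hy ha hb hab
    have hi := hIconv.2 hx hy ha hb hab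
    simp only [smul_eq_mul] at hn hi ⊢
    linarith
  have hF : ConvexOn ℝ Set.univ fun u : H => ‖u‖ ^ 2 + I u + c * J u := by
    refine ⟨convex_univ, fun x hx y hy a b ha hb hab => ?_⟩
    have hg := hG.2 hx hy ha hb hab
    have hj := mul_le_mul_of_nonneg_left (hJconv.2 hx hy ha hb hab) hc₀
    simp only [smul_eq_mul] at hg hj ⊢
    linear_combination hg + hj + a * b * ‖x - y‖ ^ 2 / 2 * hcL
  have hSconv : Convex ℝ S := by
    subst hS
    intro x hx y hy a b ha hb hab
    refine ⟨V.convex hx.1 hy.1 ha hb hab, fun v hv => ?_⟩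
    have hxy := hF.2 (Set.mem_univ x) (Set.mem_univ y) ha hb hab
    have hxv := mul_le_mul_of_nonneg_left (hx.2 v hv) ha
    have hyv := mul_le_mul_of_nonneg_left (hy.2 v hv) hb
    simp only [smul_eq_mul] at hxy
    linear_combination hxy + hxv + hyv + (‖v‖ ^ 2 + I v + c * J v) * hab
  have hSclosed : IsClosed S := by
    subst hS
    simp only [Set.ofPred_and, Set.ofPred_forall]
    exact hV.inter <| isClosed_biInter fun v _ => isClosed_le (by fun_prop) continuous_const
  refine ⟨hSconv, hSclosed, fun hne => ?_⟩
  have hGS : StrongConvexOn S (2 - ν) fun u : H => ‖u‖ ^ 2 + I u :=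
    ⟨hSconv, fun _ _ _ _ => hG.2 (Set.mem_univ _) (Set.mem_univ _)⟩
  refine hGS.existsUnique_eq_sInf (by linarith) (by fun_prop) ⟨0, ?_⟩ hSclosed hne
  rintro _ ⟨u, -, rfl⟩
  exact add_nonneg (sq_nonneg _) (hInonneg u)
end

section
/- Let H be a real Hilbert space, V a closed linear subspace of H, and I, J : H → ℝ Fréchet differentiable functionals whose gradients ∇I and ∇J are Lipschitz with constants ν and L respectively, where 0 ≤ ν < 2 and L > 0. Assume I(u) ≥ 0 for all u ∈ H, I(0) = 0, and there exists v₀ ∈ V with ⟨∇J(0), v₀⟩ ≠ 0. Let S be the set of global minima over V of the functional u ↦ ‖u‖² + I(u) + ((2 − ν)/L) J(u). Then δ := inf_{u ∈ S} (‖u‖² + I(u)) > 0, with the convention that the infimum over the empty set is +∞. -/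
open scoped RealInnerProductSpace

/-- The derivative at a minimizer over a subspace vanishes on the subspace. -/
theorem HasFDerivAt.apply_eq_zero_of_forall_mem_submodule_le
    {E : Type*} [NormedAddCommGroup E] [NormedSpace ℝ E]
    {V : Submodule ℝ E} {F : E → ℝ} {F' : E →L[ℝ] ℝ} {u v : E} (hF : HasFDerivAt F F' u)
    (hu : u ∈ V) (hmin : ∀ w ∈ V, F u ≤ F w) (hv : v ∈ V) : F' v = 0 := by
  have hline : HasDerivAt (fun t : ℝ => u + t • v) v 0 := by
    simpa using ((hasDerivAt_id (0 : ℝ)).smul_const v).const_add u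
  have hcomp : HasDerivAt (fun t : ℝ => F (u + t • v)) (F' v) 0 :=
    HasFDerivAt.comp_hasDerivAt (0 : ℝ) (by simpa using hF) hline
  refine IsLocalMin.hasDerivAt_eq_zero (Filter.Eventually.of_forall fun t => ?_) hcomp
  simpa using hmin (u + t • v) (V.add_mem hu (V.smul_mem t hv))

theorem delta_pos
    {H : Type*} [NormedAddCommGroup H] [InnerProductSpace ℝ H] [CompleteSpace H]
    (V : Submodule ℝ H) (hV : IsClosed (V : Set H))
    (I J : H → ℝ) (I' J' : H → H) (ν L : ℝ)
    (hν₀ : 0 ≤ ν) (hν₂ : ν < 2) (hL : 0 < L)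
    (hIgrad : ∀ u, HasGradientAt I (I' u) u)
    (hJgrad : ∀ u, HasGradientAt J (J' u) u)
    (hIlip : ∀ u v, ‖I' u - I' v‖ ≤ ν * ‖u - v‖)
    (hJlip : ∀ u v, ‖J' u - J' v‖ ≤ L * ‖u - v‖)
    (hInonneg : ∀ u, 0 ≤ I u) (hI0 : I 0 = 0)
    (v₀ : H) (hv₀V : v₀ ∈ V) (hv₀ : ⟪J' 0, v₀⟫ ≠ 0)
    (S : Set H)
    (hS : S = {u : H | u ∈ V ∧ ∀ v ∈ V,
      ‖u‖ ^ 2 + I u + ((2 - ν) / L) * J u ≤ ‖v‖ ^ 2 + I v + ((2 - ν) / L) * J v}) :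
    (0 : EReal) < ⨅ u ∈ S, ((‖u‖ ^ 2 + I u : ℝ) : EReal) := by
  set c : ℝ := (2 - ν) / L
  have hcpos : 0 < c := div_pos (by linarith) hL
  have hcL : c * L = 2 - ν := div_mul_cancel₀ _ hL.ne'
  have hIderiv : ∀ u, HasFDerivAt I (innerSL ℝ (I' u)) u := fun u => (hIgrad u).hasFDerivAt
  have hJderiv : ∀ u, HasFDerivAt J (innerSL ℝ (J' u)) u := fun u => (hJgrad u).hasFDerivAt
  have hI'0 : I' 0 = 0 := by
    have h := (hIderiv 0).apply_eq_zero_of_forall_mem_submodule_le (V := ⊤) (v := I' 0)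
      Submodule.mem_top (fun w _ => by rw [hI0]; exact hInonneg w) Submodule.mem_top
    exact inner_self_eq_zero.mp h
  have hv₀pos : 0 < ‖v₀‖ := norm_pos_iff.mpr fun h => hv₀ (by simp [h])
  set r : ℝ := c * |⟪J' 0, v₀⟫| / (4 * ‖v₀‖) with hr
  have hrpos : 0 < r := div_pos (mul_pos hcpos (abs_pos.mpr hv₀)) (by positivity)
  have hbound : ∀ u ∈ S, r ≤ ‖u‖ := by
    intro u hu
    rw [hS] at hu
    obtain ⟨huV, hmin⟩ := hu
    have hcrit : 2 * ⟪u, v₀⟫ + ⟪I' u, v₀⟫ + c * ⟪J' u, v₀⟫ = 0 := by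
      have hderiv := ((hasStrictFDerivAt_norm_sq u).hasFDerivAt.add (hIderiv u)).add
        ((hJderiv u).const_mul c)
      simpa using hderiv.apply_eq_zero_of_forall_mem_submodule_le huV hmin hv₀V
    have hJ0 : c * ⟪J' 0, v₀⟫ = -⟪(2 : ℝ) • u + I' u + c • (J' u - J' 0), v₀⟫ := by
      simp only [inner_add_left, inner_sub_left, real_inner_smul_left]
      linarith
    have hnorm : ‖(2 : ℝ) • u + I' u + c • (J' u - J' 0)‖ ≤ 4 * ‖u‖ := by
      have hI : ‖I' u‖ ≤ ν * ‖u‖ := by simpa [hI'0] using hIlip u 0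
      have hJ : ‖J' u - J' 0‖ ≤ L * ‖u‖ := by simpa using hJlip u 0
      calc ‖(2 : ℝ) • u + I' u + c • (J' u - J' 0)‖
          ≤ ‖(2 : ℝ) • u‖ + ‖I' u‖ + ‖c • (J' u - J' 0)‖ := norm_add₃_le
        _ = 2 * ‖u‖ + ‖I' u‖ + c * ‖J' u - J' 0‖ := by
          rw [norm_smul, norm_smul, Real.norm_of_nonneg hcpos.le, Real.norm_two]
        _ ≤ 2 * ‖u‖ + ν * ‖u‖ + c * (L * ‖u‖) := by gcongr
        _ = 4 * ‖u‖ := by rw [← mul_assoc, hcL]; ring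
    rw [hr, div_le_iff₀ (by positivity)]
    calc c * |⟪J' 0, v₀⟫| = |c * ⟪J' 0, v₀⟫| := by rw [abs_mul, abs_of_pos hcpos]
      _ ≤ ‖(2 : ℝ) • u + I' u + c • (J' u - J' 0)‖ * ‖v₀‖ := by
        rw [hJ0, abs_neg]; exact abs_real_inner_le_norm _ _
      _ ≤ 4 * ‖u‖ * ‖v₀‖ := by gcongr
      _ = ‖u‖ * (4 * ‖v₀‖) := by ring
  refine lt_of_lt_of_le (b := ((r ^ 2 : ℝ) : EReal)) (EReal.coe_pos.mpr (by positivity)) ?_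
  refine le_iInf₂ fun u hu => EReal.coe_le_coe_iff.mpr ?_
  have hsq : r ^ 2 ≤ ‖u‖ ^ 2 := pow_le_pow_left₀ hrpos.le (hbound u hu) 2
  linarith [hInonneg u]
end

section
/- Let H be a real Hilbert space, V a closed linear subspace of H, and I, J : H → ℝ Fréchet differentiable functionals whose gradients ∇I and ∇J are Lipschitz with constants ν and L respectively, where 0 ≤ ν < 2 and L > 0. Assume I(u) ≥ 0 for all u ∈ H and I(0) = 0. Let S be the set of global minima over V of u ↦ ‖u‖² + I(u) + ((2 − ν)/L) J(u), and let δ := inf_{u ∈ S} (‖u‖² + I(u)) (with inf ∅ = +∞). Then for every real r with 0 < r < δ there exist λ* > L/(2 − ν) and u* ∈ V with ‖u*‖² + I(u*) = r such that J(u*) + λ* r = inf_{u ∈ V} ( J(u) + λ* (‖u‖² + I(u)) ). -/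
open Filter Topology

/-- A differentiable function with monotone gradient is convex. -/
theorem convexOn_univ_of_monotone_gradient
    {H : Type*} [NormedAddCommGroup H] [InnerProductSpace ℝ H] [CompleteSpace H]
    {f : H → ℝ} {f' : H → H} (hf : ∀ u, HasGradientAt f (f' u) u)
    (hmono : ∀ u v, 0 ≤ inner ℝ (f' u - f' v) (u - v)) :
    ConvexOn ℝ Set.univ f := by
  refine ⟨convex_univ, fun x _ y _ a b ha hb hab => ?_⟩
  have hderiv : ∀ t : ℝ, HasDerivAt (fun t : ℝ => f (x + t • (y - x)))
      (inner ℝ (f' (x + t • (y - x))) (y - x)) t := fun t => by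
    have hline : HasDerivAt (fun t : ℝ => x + t • (y - x)) (y - x) t := by
      simpa using ((hasDerivAt_id t).smul_const (y - x)).const_add x
    exact (hf (x + t • (y - x))).hasFDerivAt.comp_hasDerivAt t hline
  have hconv : ConvexOn ℝ Set.univ (fun t : ℝ => f (x + t • (y - x))) := by
    refine Monotone.convexOn_univ_of_deriv (fun t => (hderiv t).differentiableAt) ?_
    intro s t hst
    rw [(hderiv s).deriv, (hderiv t).deriv]
    rcases hst.eq_or_lt with rfl | hlt
    · exact le_rfl
    have h := hmono (x + t • (y - x)) (x + s • (y - x))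
    rw [add_sub_add_left_eq_sub, ← sub_smul, inner_smul_right, inner_sub_left] at h
    exact sub_nonneg.1 (nonneg_of_mul_nonneg_right h (sub_pos.2 hlt))
  have h := hconv.2 (Set.mem_univ 0) (Set.mem_univ 1) ha hb hab
  have hpt : a • x + b • y = x + b • (y - x) := by
    rw [eq_sub_of_add_eq hab]; module
  simpa [hpt] using h

/-- A decreasing sequence of nonempty closed convex subsets of a bounded set in a Hilbert space
has a common point. -/
theorem nonempty_iInter_of_antitone_convex
    {H : Type*} [NormedAddCommGroup H] [InnerProductSpace ℝ H] [CompleteSpace H]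
    {C : ℕ → Set H} (hanti : Antitone C) (hne : ∀ n, (C n).Nonempty)
    (hclosed : ∀ n, IsClosed (C n)) (hconv : ∀ n, Convex ℝ (C n))
    (hbdd : Bornology.IsBounded (C 0)) : (⋂ n, C n).Nonempty := by
  have hproj : ∀ n, ∃ p ∈ C n, ∀ w ∈ C n, inner ℝ ((0 : H) - p) (w - p) ≤ 0 := fun n => by
    obtain ⟨p, hp, hmin⟩ :=
      exists_norm_eq_iInf_of_complete_convex (hne n) (hclosed n).isComplete (hconv n) 0
    exact ⟨p, hp, (norm_eq_iInf_iff_real_inner_le_zero (hconv n) hp).1 hmin⟩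
  choose p hpmem hpinner using hproj
  have hdist : ∀ n k, n ≤ k → ‖p k - p n‖ ^ 2 ≤ ‖p k‖ ^ 2 - ‖p n‖ ^ 2 := fun n k hnk => by
    have h := hpinner n (p k) (hanti hnk (hpmem k))
    rw [zero_sub, inner_neg_left, inner_sub_right, real_inner_self_eq_norm_sq] at h
    rw [norm_sub_sq_real, real_inner_comm]
    linarith
  have hmono : Monotone fun n => ‖p n‖ ^ 2 := fun n k hnk => by
    have := hdist n k hnk
    have := sq_nonneg ‖p k - p n‖
    simp only
    linarith
  obtain ⟨R, hR⟩ := hbdd.exists_norm_le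
  have hbound : BddAbove (Set.range fun n => ‖p n‖ ^ 2) := by
    refine ⟨R ^ 2, ?_⟩
    rintro _ ⟨n, rfl⟩
    exact pow_le_pow_left₀ (norm_nonneg _) (hR _ (hanti (Nat.zero_le n) (hpmem n))) 2
  have hlim := tendsto_atTop_ciSup hmono hbound
  set s := ⨆ n, ‖p n‖ ^ 2
  have hcauchy : CauchySeq p := by
    refine cauchySeq_of_le_tendsto_0' (fun n => √(s - ‖p n‖ ^ 2)) (fun n k hnk => ?_) ?_
    · rw [dist_comm, dist_eq_norm]
      refine Real.le_sqrt_of_sq_le ((hdist n k hnk).trans ?_)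
      exact sub_le_sub_right (le_ciSup hbound k) _
    · simpa using (hlim.const_sub s).sqrt
  obtain ⟨q, hq⟩ := cauchySeq_tendsto_of_complete hcauchy
  refine ⟨q, Set.mem_iInter.2 fun n => (hclosed n).mem_of_tendsto hq ?_⟩
  filter_upwards [eventually_ge_atTop n] with k hk using hanti hk (hpmem k)

/-- A continuous convex function attains its minimum on a nonempty bounded closed convex subset of
a Hilbert space. -/
theorem ConvexOn.exists_isMinOn_of_isBounded
    {H : Type*} [NormedAddCommGroup H] [InnerProductSpace ℝ H] [CompleteSpace H]
    {K : Set H} {f : H → ℝ} (hf : ConvexOn ℝ K f) (hcont : Continuous f)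
    (hne : K.Nonempty) (hclosed : IsClosed K) (hbdd : Bornology.IsBounded K) :
    ∃ u ∈ K, IsMinOn f K u := by
  have hinter : ∀ c : ℕ → ℝ, Antitone c → (∀ n, ∃ u ∈ K, f u ≤ c n) →
      ∃ u ∈ K, ∀ n, f u ≤ c n := fun c hc hex => by
    obtain ⟨u, hu⟩ := nonempty_iInter_of_antitone_convex (C := fun n => {u ∈ K | f u ≤ c n})
      (fun n k hnk u hu => ⟨hu.1, hu.2.trans (hc hnk)⟩) hex
      (fun n => hclosed.inter (isClosed_le hcont continuous_const))
      (fun n => hf.convex_le (c n)) (hbdd.subset fun u hu => hu.1)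
    rw [Set.mem_iInter] at hu
    exact ⟨u, (hu 0).1, fun n => (hu n).2⟩
  have hbelow : BddBelow (f '' K) := by
    by_contra hunb
    rw [not_bddBelow_iff] at hunb
    obtain ⟨u, -, hu⟩ := hinter (fun n => -(n : ℝ))
      (fun n k hnk => neg_le_neg (Nat.cast_le.2 hnk)) (fun n => by
        obtain ⟨_, ⟨u, hu, rfl⟩, hlt⟩ := hunb (-(n : ℝ))
        exact ⟨u, hu, hlt.le⟩)
    obtain ⟨n, hn⟩ := exists_nat_gt (-f u)
    have := hu n
    linarith
  obtain ⟨c, hc, hlim, hmem⟩ := exists_seq_tendsto_sInf (hne.image f) hbelow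
  obtain ⟨u, hu, hle⟩ := hinter c hc fun n => by
    obtain ⟨u, hu, heq⟩ := hmem n
    exact ⟨u, hu, heq.le⟩
  exact ⟨u, hu, fun v hv => (ge_of_tendsto' hlim hle).trans
    (csInf_le hbelow (Set.mem_image_of_mem f hv))⟩

/-- Lagrange multiplier for a convex problem with one convex constraint satisfying Slater's
condition; the multiplier is positive when the constraint is relevant. -/
theorem ConvexOn.exists_pos_multiplier {E : Type*} [AddCommGroup E] [Module ℝ E]
    {V : Set E} {f g : E → ℝ} (hf : ConvexOn ℝ V f) (hg : ConvexOn ℝ V g) {r m : ℝ}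
    (hm : ∀ u ∈ V, g u ≤ r → m ≤ f u) (hslater : ∃ v ∈ V, g v < r) (hrel : ∃ u ∈ V, f u < m) :
    ∃ μ : ℝ, 0 < μ ∧ ∀ u ∈ V, m ≤ f u + μ * (g u - r) := by
  obtain ⟨v₀, hv₀, hgv₀⟩ := hslater
  obtain ⟨u₀, hu₀, hfu₀⟩ := hrel
  have hgu₀ : r < g u₀ := not_le.1 fun h => (hm u₀ hu₀ h).not_gt hfu₀
  obtain ⟨μ, hμup, hμlow⟩ := exists_between_of_forall_le
    (s := (fun u => (m - f u) / (g u - r)) '' {u ∈ V | r < g u})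
    (t := (fun v => (f v - m) / (r - g v)) '' {v ∈ V | g v < r})
    ⟨_, u₀, ⟨hu₀, hgu₀⟩, rfl⟩ ⟨_, v₀, ⟨hv₀, hgv₀⟩, rfl⟩ (by
      rintro _ ⟨u, ⟨hu, hgu⟩, rfl⟩ _ ⟨v, ⟨hv, hgv⟩, rfl⟩
      have hp : 0 < g u - r := sub_pos.2 hgu
      have hq : 0 < r - g v := sub_pos.2 hgv
      have hpq : 0 < g u - g v := by linarith
      have ha : 0 ≤ (r - g v) / (g u - g v) := by positivity
      have hb : 0 ≤ (g u - r) / (g u - g v) := by positivity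
      have hab : (r - g v) / (g u - g v) + (g u - r) / (g u - g v) = 1 := by
        field_simp; ring
      have hgw := hg.2 hu hv ha hb hab
      have hfw := hf.2 hu hv ha hb hab
      have hr : (r - g v) / (g u - g v) * g u + (g u - r) / (g u - g v) * g v = r := by
        field_simp; ring
      simp only [smul_eq_mul] at hgw hfw
      have hmw := (hm _ (hf.1 hu hv ha hb hab) (hgw.trans hr.le)).trans hfw
      have hmul : m * (g u - g v) ≤ (r - g v) * f u + (g u - r) * f v := by
        rw [← le_div_iff₀ hpq]
        refine hmw.trans (le_of_eq ?_)
        field_simp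
      simp only
      rw [div_le_div_iff₀ hp hq]
      linarith)
  refine ⟨μ, ?_, fun u hu => ?_⟩
  · exact (div_pos (sub_pos.2 hfu₀) (sub_pos.2 hgu₀)).trans_le
      (hμup ⟨u₀, ⟨hu₀, hgu₀⟩, rfl⟩)
  · rcases lt_trichotomy (g u) r with h | h | h
    · have := (le_div_iff₀ (sub_pos.2 h)).1 (hμlow ⟨u, ⟨hu, h⟩, rfl⟩)
      linarith
    · simpa [h] using hm u hu h.le
    · have := (div_le_iff₀ (sub_pos.2 h)).1 (hμup ⟨u, ⟨hu, h⟩, rfl⟩)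
      linarith

theorem neg_mul_norm_sq_le_inner_of_lipschitz
    {H : Type*} [NormedAddCommGroup H] [InnerProductSpace ℝ H] {T : H → H} {k : ℝ}
    (hT : ∀ u v, ‖T u - T v‖ ≤ k * ‖u - v‖) (u v : H) :
    -(k * ‖u - v‖ ^ 2) ≤ inner ℝ (T u - T v) (u - v) := by
  have h := neg_le_of_abs_le (abs_real_inner_le_norm (T u - T v) (u - v))
  have := mul_le_mul_of_nonneg_right (hT u v) (norm_nonneg (u - v))
  linarith

theorem lagrange_multiplier_exists
    {H : Type*} [NormedAddCommGroup H] [InnerProductSpace ℝ H] [CompleteSpace H]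
    (V : Submodule ℝ H) (hV : IsClosed (V : Set H))
    (I J : H → ℝ) (I' J' : H → H) (ν L : ℝ)
    (hν₀ : 0 ≤ ν) (hν₂ : ν < 2) (hL : 0 < L)
    (hIgrad : ∀ u, HasGradientAt I (I' u) u)
    (hJgrad : ∀ u, HasGradientAt J (J' u) u)
    (hIlip : ∀ u v, ‖I' u - I' v‖ ≤ ν * ‖u - v‖)
    (hJlip : ∀ u v, ‖J' u - J' v‖ ≤ L * ‖u - v‖)
    (hInonneg : ∀ u, 0 ≤ I u) (hI0 : I 0 = 0)
    (S : Set H)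
    (hS : S = {u : H | u ∈ V ∧ ∀ v ∈ V,
      ‖u‖ ^ 2 + I u + ((2 - ν) / L) * J u ≤ ‖v‖ ^ 2 + I v + ((2 - ν) / L) * J v})
    (r : ℝ) (hr₀ : 0 < r)
    (hrδ : (r : EReal) < ⨅ u ∈ S, ((‖u‖ ^ 2 + I u : ℝ) : EReal)) :
    ∃ lam : ℝ, ∃ ustar : H, L / (2 - ν) < lam ∧ ustar ∈ V ∧
      ‖ustar‖ ^ 2 + I ustar = r ∧
      IsLeast ((fun u : H => J u + lam * (‖u‖ ^ 2 + I u)) '' (V : Set H))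
        (J ustar + lam * r) := by
  have hν : 0 < 2 - ν := sub_pos.2 hν₂
  set Q : H → ℝ := fun u => ‖u‖ ^ 2 + I u with hQ
  set F : H → ℝ := fun u => ‖u‖ ^ 2 + I u + ((2 - ν) / L) * J u with hF
  have hQgrad : ∀ u, HasGradientAt Q ((2 : ℝ) • u + I' u) u := fun u => by
    rw [hasGradientAt_iff_hasFDerivAt]
    refine ((hasStrictFDerivAt_norm_sq u).hasFDerivAt.add (hIgrad u).hasFDerivAt).congr_fderiv ?_
    ext v
    simp
  have hFgrad : ∀ u, HasGradientAt F ((2 : ℝ) • u + I' u + ((2 - ν) / L) • J' u) u := fun u => by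
    rw [hasGradientAt_iff_hasFDerivAt]
    refine ((hQgrad u).hasFDerivAt.add
      ((hJgrad u).hasFDerivAt.const_mul ((2 - ν) / L))).congr_fderiv ?_
    ext v
    simp
  have hQstrong : ∀ u v, (2 - ν) * ‖u - v‖ ^ 2 ≤
      inner ℝ ((2 : ℝ) • u + I' u - ((2 : ℝ) • v + I' v)) (u - v) := fun u v => by
    have h := neg_mul_norm_sq_le_inner_of_lipschitz hIlip u v
    rw [add_sub_add_comm, ← smul_sub, inner_add_left, real_inner_smul_left,
      real_inner_self_eq_norm_sq]
    linarith
  have hQconv : ConvexOn ℝ Set.univ Q :=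
    convexOn_univ_of_monotone_gradient hQgrad fun u v =>
      (mul_nonneg hν.le (sq_nonneg _)).trans (hQstrong u v)
  have hFconv : ConvexOn ℝ Set.univ F :=
    convexOn_univ_of_monotone_gradient hFgrad fun u v => by
      have h := mul_le_mul_of_nonneg_left (neg_mul_norm_sq_le_inner_of_lipschitz hJlip u v)
        (div_pos hν hL).le
      have h' := hQstrong u v
      have heq : (2 - ν) / L * -(L * ‖u - v‖ ^ 2) = -((2 - ν) * ‖u - v‖ ^ 2) := by field_simp
      rw [add_sub_add_comm, ← smul_sub, inner_add_left, real_inner_smul_left]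
      linarith
  have hQcont : Continuous Q :=
    continuous_iff_continuousAt.2 fun u => (hQgrad u).differentiableAt.continuousAt
  have hFcont : Continuous F :=
    continuous_iff_continuousAt.2 fun u => (hFgrad u).differentiableAt.continuousAt
  have hQzero : Q 0 = 0 := by simp [hQ, hI0]
  have hQV := hQconv.subset (Set.subset_univ _) V.convex
  have hFV := hFconv.subset (Set.subset_univ _) V.convex
  have hbdd : Bornology.IsBounded {u ∈ (V : Set H) | Q u ≤ r} := by
    refine isBounded_iff_forall_norm_le.2 ⟨√r, fun u hu => Real.le_sqrt_of_sq_le ?_⟩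
    exact (le_add_of_nonneg_right (hInonneg u)).trans hu.2
  obtain ⟨w, ⟨hwV, hwr⟩, hmin⟩ :=
    (hFV.subset (Set.sep_subset _ _) (hQV.convex_le r)).exists_isMinOn_of_isBounded hFcont
      ⟨0, V.zero_mem, hQzero.trans_le hr₀.le⟩
      (hV.inter (isClosed_le hQcont continuous_const)) hbdd
  have hrel : ∃ u ∈ (V : Set H), F u < F w := by
    by_contra! hglob
    have hwS : w ∈ S := hS ▸ ⟨hwV, hglob⟩
    exact (EReal.coe_lt_coe_iff.1 (hrδ.trans_le (iInf₂_le w hwS))).not_ge hwr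
  obtain ⟨μ, hμ, hmult⟩ := hFV.exists_pos_multiplier hQV (r := r) (m := F w)
    (fun u hu hur => hmin ⟨hu, hur⟩) ⟨0, V.zero_mem, hQzero.trans_lt hr₀⟩ hrel
  have hQw : Q w = r := by
    refine le_antisymm hwr (sub_nonneg.1 (nonneg_of_mul_nonneg_right ?_ hμ))
    linarith [hmult w hwV]
  have hscale : ∀ u, L / (2 - ν) * (F u + μ * Q u) = J u + L / (2 - ν) * (1 + μ) * Q u :=
    fun u => by simp only [hF, hQ]; field_simp; ring
  have hpos : 0 < L / (2 - ν) := div_pos hL hν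
  refine ⟨L / (2 - ν) * (1 + μ), w, lt_mul_of_one_lt_right hpos (by linarith), hwV, hQw,
    ⟨w, hwV, by simp only [← hQw, hQ]⟩, ?_⟩
  rintro _ ⟨u, hu, rfl⟩
  calc J w + L / (2 - ν) * (1 + μ) * r = L / (2 - ν) * (F w + μ * Q w) := by rw [hscale, hQw]
    _ ≤ L / (2 - ν) * (F u + μ * Q u) := by
      refine mul_le_mul_of_nonneg_left ?_ hpos.le
      rw [hQw]
      linarith [hmult u hu]
    _ = J u + L / (2 - ν) * (1 + μ) * Q u := hscale u
end

section
/- Let H be a real Hilbert space, V a closed linear subspace of H, and I, J : H → ℝ Fréchet differentiable functionals whose gradients ∇I and ∇J are Lipschitz with constants ν and L respectively, where 0 ≤ ν < 2 and L > 0. Let r > 0, set C_r := { u ∈ V : ‖u‖² + I(u) = r }, and suppose there exist λ > L/(2 − ν) and u* ∈ C_r such that u* is a global minimum over V of the functional u ↦ J(u) + λ(‖u‖² + I(u)). Then u* is the unique global minimum of the restriction of J to C_r: J(u*) ≤ J(u) for all u ∈ C_r, and any u ∈ C_r with J(u) = J(u*) equals u*. -/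
open scoped InnerProductSpace

/-- A functional that attains its minimum over a subspace at `x` has gradient orthogonal to that
subspace at `x`. -/
theorem HasGradientAt.inner_eq_zero_of_forall_le
    {H : Type*} [NormedAddCommGroup H] [InnerProductSpace ℝ H] [CompleteSpace H]
    {V : Submodule ℝ H} {F : H → ℝ} {g x w : H} (hF : HasGradientAt F g x)
    (hx : x ∈ V) (hw : w ∈ V) (hmin : ∀ u ∈ V, F x ≤ F u) : ⟪g, w⟫_ℝ = 0 := by
  have hline : HasDerivAt (fun t : ℝ => x + t • w) w 0 := by
    simpa using ((hasDerivAt_id (0 : ℝ)).smul_const w).const_add x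
  have hF' : HasFDerivAt F (InnerProductSpace.toDual ℝ H g) (x + (0 : ℝ) • w) := by
    simpa using hF.hasFDerivAt
  have hcomp : HasDerivAt (fun t : ℝ => F (x + t • w)) ⟪g, w⟫_ℝ 0 := by
    simpa [Function.comp_def] using hF'.comp_hasDerivAt (0 : ℝ) hline
  refine IsLocalMin.hasDerivAt_eq_zero (Filter.Eventually.of_forall fun t => ?_) hcomp
  simpa using hmin _ (V.add_mem hx (V.smul_mem t hw))

/-- The gradient of the penalized functional `J + c (‖·‖² + I)`. -/
theorem HasGradientAt.add_const_mul_norm_sq_add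
    {H : Type*} [NormedAddCommGroup H] [InnerProductSpace ℝ H] [CompleteSpace H]
    {I J : H → ℝ} {i j x : H} (hI : HasGradientAt I i x) (hJ : HasGradientAt J j x) (c : ℝ) :
    HasGradientAt (fun u => J u + c * (‖u‖ ^ 2 + I u)) (j + c • ((2 : ℝ) • x + i)) x := by
  rw [hasGradientAt_iff_hasFDerivAt] at *
  refine (hJ.add (((hasStrictFDerivAt_norm_sq x).hasFDerivAt.add hI).const_mul c)).congr_fderiv ?_
  ext w
  simp

theorem unique_min_on_sphere_from_penalized_min
    {H : Type*} [NormedAddCommGroup H] [InnerProductSpace ℝ H] [CompleteSpace H]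
    (V : Submodule ℝ H) (hV : IsClosed (V : Set H))
    (I J : H → ℝ) (I' J' : H → H) (ν L : ℝ)
    (hν₀ : 0 ≤ ν) (hν₂ : ν < 2) (hL : 0 < L)
    (hIgrad : ∀ u, HasGradientAt I (I' u) u)
    (hJgrad : ∀ u, HasGradientAt J (J' u) u)
    (hIlip : ∀ u v, ‖I' u - I' v‖ ≤ ν * ‖u - v‖)
    (hJlip : ∀ u v, ‖J' u - J' v‖ ≤ L * ‖u - v‖)
    (r : ℝ) (hr₀ : 0 < r)
    (Cr : Set H) (hCr : Cr = {u : H | u ∈ V ∧ ‖u‖ ^ 2 + I u = r})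
    (lam : ℝ) (hlam : L / (2 - ν) < lam)
    (ustar : H) (hustarC : ustar ∈ Cr)
    (hmin : ∀ u ∈ V, J ustar + lam * (‖ustar‖ ^ 2 + I ustar)
      ≤ J u + lam * (‖u‖ ^ 2 + I u)) :
    (∀ u ∈ Cr, J ustar ≤ J u) ∧ (∀ u ∈ Cr, J u = J ustar → u = ustar) := by
  have hgap : 0 < lam * (2 - ν) - L := by
    rw [div_lt_iff₀ (by linarith)] at hlam
    linarith
  have hlam₀ : 0 < lam := (div_pos hL (by linarith)).trans hlam
  subst hCr
  obtain ⟨hsV, hsr⟩ := hustarC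
  refine ⟨fun u ⟨huV, hur⟩ => ?_, fun u ⟨huV, hur⟩ hJu => ?_⟩
  · have := hmin u huV
    rw [hsr, hur] at this
    linarith
  have hminu : ∀ v ∈ V, J u + lam * (‖u‖ ^ 2 + I u) ≤ J v + lam * (‖v‖ ^ 2 + I v) := by
    intro v hv
    rw [hur, hJu, ← hsr]
    exact hmin v hv
  have hwV : u - ustar ∈ V := V.sub_mem huV hsV
  have hu := ((hIgrad u).add_const_mul_norm_sq_add (hJgrad u)
    lam).inner_eq_zero_of_forall_le huV hwV hminu
  have hs := ((hIgrad ustar).add_const_mul_norm_sq_add (hJgrad ustar)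
    lam).inner_eq_zero_of_forall_le hsV hwV hmin
  have hcritical : ⟪J' u - J' ustar, u - ustar⟫_ℝ
      + lam * (2 * ‖u - ustar‖ ^ 2 + ⟪I' u - I' ustar, u - ustar⟫_ℝ) = 0 := by
    have hsq : ‖u - ustar‖ ^ 2 = ⟪u, u - ustar⟫_ℝ - ⟪ustar, u - ustar⟫_ℝ := by
      rw [← real_inner_self_eq_norm_sq, ← inner_sub_left]
    rw [hsq, inner_sub_left (J' u), inner_sub_left (I' u)]
    simp only [inner_add_left, real_inner_smul_left] at hu hs
    linear_combination hu - hs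
  have hinner : ∀ (k : ℝ) (a : H), ‖a‖ ≤ k * ‖u - ustar‖ →
      -(k * ‖u - ustar‖ ^ 2) ≤ ⟪a, u - ustar⟫_ℝ := by
    intro k a ha
    have hcs := neg_le_of_abs_le (abs_real_inner_le_norm a (u - ustar))
    nlinarith [mul_le_mul_of_nonneg_right ha (norm_nonneg (u - ustar))]
  have hJw := hinner L _ (hJlip u ustar)
  have hIw := mul_le_mul_of_nonneg_left (hinner ν _ (hIlip u ustar)) hlam₀.le
  by_contra hne
  have hpos : 0 < ‖u - ustar‖ ^ 2 := by
    have := norm_pos_iff.mpr (sub_ne_zero.mpr hne)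
    positivity
  nlinarith [mul_pos hgap hpos]
end

section
/- (Abstract form of Theorem 1.) Let H be a real Hilbert space, V a closed linear subspace of H, and I, J : H → ℝ Fréchet differentiable functionals whose gradients ∇I and ∇J are Lipschitz with constants ν and L respectively, where 0 ≤ ν < 2 and L > 0. Assume I(u) ≥ 0 for all u ∈ H, I(0) = 0, and there exists v₀ ∈ V with ⟨∇J(0), v₀⟩ ≠ 0. Let S be the set of global minima over V of u ↦ ‖u‖² + I(u) + ((2 − ν)/L) J(u). Then δ := inf_{u ∈ S} (‖u‖² + I(u)) > 0 (with inf ∅ = +∞), and for each real r with 0 < r < δ, the restriction of J to the set C_r := { u ∈ V : ‖u‖² + I(u) = r } has a unique global minimum. -/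
open scoped RealInnerProductSpace

open Filter Topology Set

section Gradient

variable {H : Type*} [NormedAddCommGroup H] [InnerProductSpace ℝ H] [CompleteSpace H]

/-- The derivative of a functional along a line. -/
theorem HasGradientAt.hasDerivAt_line {F : H → ℝ} {g u d : H} {t : ℝ}
    (h : HasGradientAt F g (u + t • d)) :
    HasDerivAt (fun s : ℝ => F (u + s • d)) ⟪g, d⟫ t := by
  have hline : HasDerivAt (fun s : ℝ => u + s • d) d t := by
    simpa using ((hasDerivAt_id t).smul_const d).const_add u
  have hcomp := h.hasFDerivAt.comp_hasDerivAt t hline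
  rw [InnerProductSpace.toDual_apply_apply] at hcomp
  exact hcomp

theorem HasGradientAt.neg' {F : H → ℝ} {g u : H} (h : HasGradientAt F g u) :
    HasGradientAt (fun x => -F x) (-g) u := by
  rw [hasGradientAt_iff_hasFDerivAt, map_neg]
  exact h.hasFDerivAt.neg

/-- The descent lemma: a functional with `K`-Lipschitz gradient lies below its quadratic models. -/
theorem le_quadratic_of_lipschitz_gradient {F : H → ℝ} {F' : H → H} {K : ℝ}
    (hF : ∀ u, HasGradientAt F (F' u) u) (hK : ∀ u v, ‖F' u - F' v‖ ≤ K * ‖u - v‖) (u v : H) :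
    F v ≤ F u + ⟪F' u, v - u⟫ + K / 2 * ‖v - u‖ ^ 2 := by
  set d := v - u with hd
  let φ : ℝ → ℝ := fun t => F (u + t • d) - (t * ⟪F' u, d⟫ + K / 2 * ‖d‖ ^ 2 * t ^ 2)
  have hφ : ∀ t, HasDerivAt φ (⟪F' (u + t • d), d⟫ - (⟪F' u, d⟫ + K * ‖d‖ ^ 2 * t)) t := by
    intro t
    have h₁ := (hF (u + t • d)).hasDerivAt_line
    have h₂ := ((hasDerivAt_id t).mul_const ⟪F' u, d⟫).add
      (((hasDerivAt_id t).pow 2).const_mul (K / 2 * ‖d‖ ^ 2))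
    refine (h₁.sub h₂).congr_deriv ?_
    simp
    ring
  have hanti : AntitoneOn φ (Icc 0 1) := by
    refine antitoneOn_of_deriv_nonpos (convex_Icc 0 1)
      (fun t _ => (hφ t).continuousAt.continuousWithinAt)
      (fun t _ => (hφ t).differentiableAt.differentiableWithinAt) ?_
    intro t ht
    rw [interior_Icc] at ht
    rw [(hφ t).deriv]
    have h₁ : ⟪F' (u + t • d) - F' u, d⟫ ≤ K * (t * ‖d‖) * ‖d‖ := by
      refine (real_inner_le_norm _ _).trans (mul_le_mul_of_nonneg_right ?_ (norm_nonneg d))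
      simpa [norm_smul, abs_of_pos ht.1] using hK (u + t • d) u
    rw [inner_sub_left] at h₁
    nlinarith
  have h := hanti (left_mem_Icc.2 zero_le_one) (right_mem_Icc.2 zero_le_one) zero_le_one
  simp only [φ, one_smul, zero_smul, add_zero] at h
  rw [show u + d = v by simp [hd]] at h
  linarith

/-- A functional with `K`-Lipschitz gradient lies above its concave quadratic models. -/
theorem quadratic_le_of_lipschitz_gradient {F : H → ℝ} {F' : H → H} {K : ℝ}
    (hF : ∀ u, HasGradientAt F (F' u) u) (hK : ∀ u v, ‖F' u - F' v‖ ≤ K * ‖u - v‖) (u v : H) :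
    F u + ⟪F' u, v - u⟫ - K / 2 * ‖v - u‖ ^ 2 ≤ F v := by
  have h := le_quadratic_of_lipschitz_gradient (F := fun x => -F x) (F' := fun x => -F' x) (K := K)
    (fun u => (hF u).neg') (fun u v => by
      rw [← neg_sub_neg, neg_neg, neg_neg, norm_sub_rev u v]; exact hK v u) u v
  simp only [inner_neg_left] at h
  linarith

/-- For small `l`, the functional `‖·‖² + I + l J` has a minimizer over `V`, with quadratic
growth around it. -/
theorem exists_minimizer_quadratic_growth (V : Submodule ℝ H) (hV : IsClosed (V : Set H))
    {I J : H → ℝ} {I' J' : H → H} {ν L l : ℝ}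
    (hIgrad : ∀ u, HasGradientAt I (I' u) u) (hJgrad : ∀ u, HasGradientAt J (J' u) u)
    (hIlip : ∀ u v, ‖I' u - I' v‖ ≤ ν * ‖u - v‖) (hJlip : ∀ u v, ‖J' u - J' v‖ ≤ L * ‖u - v‖)
    (hν : 0 ≤ ν) (hL : 0 ≤ L) (hl : 0 ≤ l) (hlL : ν + l * L < 2) :
    ∃ u ∈ V, ∀ v ∈ V, ‖u‖ ^ 2 + I u + l * J u + (2 - ν - l * L) / 2 * ‖v - u‖ ^ 2
      ≤ ‖v‖ ^ 2 + I v + l * J v := by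
  have : CompleteSpace V := hV.completeSpace_coe
  let T : H → H := fun u => V.starProjection (-(2⁻¹ : ℝ) • (I' u + l • J' u))
  let K : NNReal := ⟨(ν + l * L) / 2, by positivity⟩
  have hT : ContractingWith K T := by
    refine ⟨?_, LipschitzWith.of_dist_le_mul fun u v => ?_⟩
    · rw [← NNReal.coe_lt_coe]
      change (ν + l * L) / 2 < 1
      linarith
    · rw [dist_eq_norm, dist_eq_norm]
      change _ ≤ (ν + l * L) / 2 * ‖u - v‖
      calc ‖T u - T v‖
          = ‖V.starProjection (-(2⁻¹ : ℝ) • ((I' u - I' v) + l • (J' u - J' v)))‖ := by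
            simp only [T]
            rw [← map_sub]
            congr 2
            module
        _ ≤ ‖-(2⁻¹ : ℝ) • ((I' u - I' v) + l • (J' u - J' v))‖ :=
            V.norm_starProjection_apply_le _
        _ = 2⁻¹ * ‖(I' u - I' v) + l • (J' u - J' v)‖ := by
            rw [norm_smul]; norm_num
        _ ≤ 2⁻¹ * (ν * ‖u - v‖ + l * (L * ‖u - v‖)) := by
            gcongr
            refine (norm_add_le _ _).trans (add_le_add (hIlip u v) ?_)
            rw [norm_smul, Real.norm_of_nonneg hl]
            exact mul_le_mul_of_nonneg_left (hJlip u v) hl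
        _ = (ν + l * L) / 2 * ‖u - v‖ := by ring
  let u := hT.fixedPoint T
  have hu : T u = u := hT.fixedPoint_isFixedPt
  have huV : u ∈ V := by
    rw [← hu]
    exact V.starProjection_apply_mem _
  refine ⟨u, huV, fun v hv => ?_⟩
  have horth : 2 * ⟪u, v - u⟫ + ⟪I' u, v - u⟫ + l * ⟪J' u, v - u⟫ = 0 := by
    have h := V.starProjection_inner_eq_zero (-(2⁻¹ : ℝ) • (I' u + l • J' u)) (v - u)
      (V.sub_mem hv huV)
    change ⟪_ - T u, _⟫ = 0 at h
    rw [hu, inner_sub_left, inner_smul_left, inner_add_left, inner_smul_left] at h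
    simp only [conj_trivial] at h
    linarith
  have hnorm : ‖v‖ ^ 2 = ‖u‖ ^ 2 + 2 * ⟪u, v - u⟫ + ‖v - u‖ ^ 2 := by
    rw [← norm_add_sq_real, add_sub_cancel]
  have hI := quadratic_le_of_lipschitz_gradient hIgrad hIlip u v
  have hJ := mul_le_mul_of_nonneg_left (quadratic_le_of_lipschitz_gradient hJgrad hJlip u v) hl
  linarith

/-- A functional minimized at the origin over `V` has vanishing derivatives along `V` there. -/
theorem inner_gradient_eq_zero_of_minimizer_zero {V : Submodule ℝ H} {I J : H → ℝ} {gI gJ : H}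
    {l : ℝ} (hI : HasGradientAt I gI 0) (hJ : HasGradientAt J gJ 0) (hI0 : ∀ u, I 0 ≤ I u)
    (hmin : ∀ v ∈ V, I 0 + l * J 0 ≤ ‖v‖ ^ 2 + I v + l * J v) {w : H} (hw : w ∈ V) :
    l * ⟪gJ, w⟫ = 0 := by
  have hIline : HasDerivAt (fun t : ℝ => I (0 + t • w)) ⟪gI, w⟫ 0 :=
    HasGradientAt.hasDerivAt_line (by simpa using hI)
  have hJline : HasDerivAt (fun t : ℝ => J (0 + t • w)) ⟪gJ, w⟫ 0 :=
    HasGradientAt.hasDerivAt_line (by simpa using hJ)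
  have hIw : ⟪gI, w⟫ = 0 :=
    IsLocalMin.hasDerivAt_eq_zero (Eventually.of_forall fun t => by simpa using hI0 _) hIline
  have hsq := ((hasDerivAt_id (0 : ℝ)).pow 2).mul_const (‖w‖ ^ 2)
  have h := IsLocalMin.hasDerivAt_eq_zero (Eventually.of_forall fun t => ?_)
    ((hsq.add hIline).add (hJline.const_mul l))
  · simpa [hIw] using h
  · simpa [norm_smul, mul_pow] using hmin (t • w) (V.smul_mem t hw)

end Gradient

section PenalizedMinimizers

variable {H : Type*} [NormedAddCommGroup H]

/-- Comparison of two penalized minimizers: the constraint functional controls their distance. -/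
theorem norm_sub_sq_le_of_quadratic_growth {Φ J : H → ℝ} {m L l k : ℝ} {x y : H}
    (hl : 0 ≤ l) (hlk : l < k) (hk : k * L ≤ m)
    (hx : Φ x + l * J x + (m - l * L) / 2 * ‖y - x‖ ^ 2 ≤ Φ y + l * J y)
    (hy : Φ y + k * J y + (m - k * L) / 2 * ‖y - x‖ ^ 2 ≤ Φ x + k * J x) :
    m / 2 * ‖y - x‖ ^ 2 ≤ Φ y - Φ x := by
  have h₁ := mul_le_mul_of_nonneg_left hx (hl.trans hlk.le)
  have h₂ := mul_le_mul_of_nonneg_left hy hl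
  have h₃ : 0 ≤ l * (m - k * L) * ‖y - x‖ ^ 2 :=
    mul_nonneg (mul_nonneg hl (by linarith)) (sq_nonneg _)
  refine le_of_mul_le_mul_left ?_ (sub_pos.2 hlk)
  linarith

variable [InnerProductSpace ℝ H]

/-- Penalized minimizers depend Lipschitz continuously on the penalty parameter. -/
theorem norm_sub_le_of_quadratic_growth {Φ J : H → ℝ} {m L l k q : ℝ} {x y g : H}
    (hL : 0 ≤ L) (hl : l ≤ q) (hk : k ≤ q) (hq : q * L < m)
    (hx : Φ x + l * J x + (m - l * L) / 2 * ‖y - x‖ ^ 2 ≤ Φ y + l * J y)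
    (hy : Φ y + k * J y + (m - k * L) / 2 * ‖y - x‖ ^ 2 ≤ Φ x + k * J x)
    (hJ : |J y - J x - ⟪g, y - x⟫| ≤ L / 2 * ‖y - x‖ ^ 2) :
    ‖y - x‖ ≤ ‖g‖ / (m - q * L) * |k - l| := by
  have hpos : 0 < m - q * L := sub_pos.2 hq
  rcases (norm_nonneg (y - x)).eq_or_lt with h0 | h0
  · rw [← h0]; positivity
  have hJd : |J x - J y| ≤ ‖g‖ * ‖y - x‖ + L / 2 * ‖y - x‖ ^ 2 := by
    have h₁ := abs_real_inner_le_norm g (y - x)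
    have h₂ := abs_add_le (J y - J x - ⟪g, y - x⟫) ⟪g, y - x⟫
    rw [sub_add_cancel, abs_sub_comm] at h₂
    linarith
  have hprod : (k - l) * (J x - J y) ≤ |k - l| * (‖g‖ * ‖y - x‖ + L / 2 * ‖y - x‖ ^ 2) :=
    (le_abs_self _).trans (by rw [abs_mul]; gcongr)
  have hcoef : 2 * (m - q * L) ≤ (m - l * L) + (m - k * L) - |k - l| * L := by
    rcases abs_cases (k - l) with ⟨h, _⟩ | ⟨h, _⟩ <;> rw [h] <;> nlinarith
  have hmul : 2 * (m - q * L) * ‖y - x‖ ^ 2 ≤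
      ((m - l * L) + (m - k * L) - |k - l| * L) * ‖y - x‖ ^ 2 :=
    mul_le_mul_of_nonneg_right hcoef (sq_nonneg _)
  have hfin : (m - q * L) * ‖y - x‖ ≤ ‖g‖ * |k - l| := by
    refine le_of_mul_le_mul_right ?_ h0
    linarith
  rw [div_mul_eq_mul_div, le_div_iff₀ hpos]
  linarith

end PenalizedMinimizers

theorem abstract_theorem_one
    {H : Type*} [NormedAddCommGroup H] [InnerProductSpace ℝ H] [CompleteSpace H]
    (V : Submodule ℝ H) (hV : IsClosed (V : Set H))
    (I J : H → ℝ) (I' J' : H → H) (ν L : ℝ)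
    (hν₀ : 0 ≤ ν) (hν₂ : ν < 2) (hL : 0 < L)
    (hIgrad : ∀ u, HasGradientAt I (I' u) u)
    (hJgrad : ∀ u, HasGradientAt J (J' u) u)
    (hIlip : ∀ u v, ‖I' u - I' v‖ ≤ ν * ‖u - v‖)
    (hJlip : ∀ u v, ‖J' u - J' v‖ ≤ L * ‖u - v‖)
    (hInonneg : ∀ u, 0 ≤ I u) (hI0 : I 0 = 0)
    (v₀ : H) (hv₀V : v₀ ∈ V) (hv₀ : ⟪J' 0, v₀⟫ ≠ 0)
    (S : Set H)
    (hS : S = {u : H | u ∈ V ∧ ∀ v ∈ V,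
      ‖u‖ ^ 2 + I u + ((2 - ν) / L) * J u ≤ ‖v‖ ^ 2 + I v + ((2 - ν) / L) * J v}) :
    (0 : EReal) < ⨅ u ∈ S, ((‖u‖ ^ 2 + I u : ℝ) : EReal) ∧
    ∀ r : ℝ, 0 < r → (r : EReal) < ⨅ u ∈ S, ((‖u‖ ^ 2 + I u : ℝ) : EReal) →
      ∃! ustar : H, (ustar ∈ V ∧ ‖ustar‖ ^ 2 + I ustar = r) ∧
        ∀ u, u ∈ V ∧ ‖u‖ ^ 2 + I u = r → J ustar ≤ J u := by
  have hm : 0 < 2 - ν := sub_pos.2 hν₂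
  have hIc : Continuous I := continuous_iff_continuousAt.2 fun u => (hIgrad u).continuousAt
  have hJc : Continuous J := continuous_iff_continuousAt.2 fun u => (hJgrad u).continuousAt
  have hΦc : Continuous fun u => ‖u‖ ^ 2 + I u := by fun_prop
  set c := (2 - ν) / L with hc
  have hcpos : 0 < c := div_pos hm hL
  have hcL : c * L = 2 - ν := div_mul_cancel₀ _ hL.ne'
  constructor
  · have hclosed : IsClosed S := by
      have hset : S = (V : Set H) ∩ ⋂ v ∈ V,
          {u | ‖u‖ ^ 2 + I u + c * J u ≤ ‖v‖ ^ 2 + I v + c * J v} := by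
        rw [hS]; ext u; simp
      rw [hset]
      exact hV.inter (isClosed_biInter fun v _ => isClosed_le (by fun_prop) continuous_const)
    have h0 : (0 : H) ∉ S := by
      rw [hS]
      rintro ⟨-, h⟩
      have hz := inner_gradient_eq_zero_of_minimizer_zero (hIgrad 0) (hJgrad 0)
        (fun u => hI0 ▸ hInonneg u) (l := c) (V := V) (by simpa using h) hv₀V
      exact hv₀ ((mul_eq_zero.1 hz).resolve_left hcpos.ne')
    obtain ⟨ε, hε, hball⟩ := Metric.isOpen_iff.1 hclosed.isOpen_compl 0 h0
    have hlb : ((ε ^ 2 : ℝ) : EReal) ≤ ⨅ u ∈ S, ((‖u‖ ^ 2 + I u : ℝ) : EReal) := by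
      refine le_iInf₂ fun u hu => EReal.coe_le_coe_iff.2 ?_
      have hεu : ε ≤ ‖u‖ := not_lt.1 fun h => hball (by simpa using h) hu
      have := hInonneg u
      nlinarith
    exact lt_of_lt_of_le (EReal.coe_pos.2 (by positivity)) hlb
  · intro r hr hrδ
    have hadm : ∀ {l}, l < c → l * L < 2 - ν := fun h =>
      (mul_lt_mul_of_pos_right h hL).trans_eq hcL
    have hex : ∀ l, 0 ≤ l ∧ l < c → ∃ u, u ∈ V ∧ ∀ v ∈ V,
        (‖u‖ ^ 2 + I u) + l * J u + (2 - ν - l * L) / 2 * ‖v - u‖ ^ 2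
          ≤ (‖v‖ ^ 2 + I v) + l * J v := fun l hl =>
      exists_minimizer_quadratic_growth V hV hIgrad hJgrad hIlip hJlip hν₀ hL.le hl.1
        (by linarith [hadm hl.2])
    choose! x hxV hx using hex
    have hcont : ∀ q, q < c → ContinuousOn x (Icc 0 q) := by
      intro q hq l hl
      have hbound : ∀ k ∈ Icc 0 q, dist (x k) (x l) ≤ ‖J' (x l)‖ / (2 - ν - q * L) * |k - l| := by
        intro k hk
        rw [dist_eq_norm]
        have hlc : 0 ≤ l ∧ l < c := ⟨hl.1, hl.2.trans_lt hq⟩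
        have hkc : 0 ≤ k ∧ k < c := ⟨hk.1, hk.2.trans_lt hq⟩
        refine norm_sub_le_of_quadratic_growth (Φ := fun u => ‖u‖ ^ 2 + I u) hL.le hl.2 hk.2
          (hadm hq) (hx l hlc _ (hxV k hkc))
          (by rw [norm_sub_rev]; exact hx k hkc _ (hxV l hlc)) ?_
        have h₁ := le_quadratic_of_lipschitz_gradient hJgrad hJlip (x l) (x k)
        have h₂ := quadratic_le_of_lipschitz_gradient hJgrad hJlip (x l) (x k)
        exact abs_le.2 ⟨by linarith, by linarith⟩
      refine tendsto_iff_dist_tendsto_zero.2 (squeeze_zero' (Eventually.of_forall fun _ =>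
        dist_nonneg) (eventually_mem_nhdsWithin.mono hbound) ?_)
      have hlim : Continuous fun k : ℝ => ‖J' (x l)‖ / (2 - ν - q * L) * |k - l| := by fun_prop
      simpa using (hlim.tendsto l).mono_left nhdsWithin_le_nhds
    have hx0 : ‖x 0‖ ^ 2 + I (x 0) = 0 := by
      have h := hx 0 ⟨le_rfl, hcpos⟩ 0 V.zero_mem
      simp only [zero_mul, add_zero, sub_zero, norm_zero, hI0, zero_sub, norm_neg] at h
      have hI := hInonneg (x 0)
      nlinarith [sq_nonneg ‖x 0‖, mul_nonneg hm.le (sq_nonneg ‖x 0‖)]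
    have hreach : ∃ q, (0 ≤ q ∧ q < c) ∧ r ≤ ‖x q‖ ^ 2 + I (x q) := by
      by_contra! hlt
      let l : ℕ → ℝ := fun n => c * (1 - 1 / ((n : ℝ) + 1))
      have hl : ∀ n, 0 ≤ l n ∧ l n < c := by
        intro n
        have h₁ : 0 < 1 / ((n : ℝ) + 1) := by positivity
        have h₂ : 1 / ((n : ℝ) + 1) ≤ 1 := by
          rw [div_le_one (by positivity)]; linarith [n.cast_nonneg (α := ℝ)]
        exact ⟨mul_nonneg hcpos.le (by linarith), by simp only [l]; nlinarith⟩
      have hlmono : StrictMono l := fun a b hab =>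
        mul_lt_mul_of_pos_left
          (sub_lt_sub_left (Nat.one_div_lt_one_div hab) 1) hcpos
      have hllim : Tendsto l atTop (𝓝 c) := by
        simpa [l] using ((tendsto_one_div_add_atTop_nhds_zero_nat (𝕜 := ℝ)).const_sub 1).const_mul c
      have hstep : ∀ a b, a < b → (2 - ν) / 2 * ‖x (l b) - x (l a)‖ ^ 2 ≤
          (‖x (l b)‖ ^ 2 + I (x (l b))) - (‖x (l a)‖ ^ 2 + I (x (l a))) := fun a b hab =>
        norm_sub_sq_le_of_quadratic_growth (Φ := fun u => ‖u‖ ^ 2 + I u) (hl a).1 (hlmono hab)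
          (hadm (hl b).2).le (hx _ (hl a) _ (hxV _ (hl b)))
          (by rw [norm_sub_rev]; exact hx _ (hl b) _ (hxV _ (hl a)))
      have hmono : Monotone fun n => ‖x (l n)‖ ^ 2 + I (x (l n)) := by
        intro a b hab
        rcases hab.eq_or_lt with rfl | hab
        · exact le_rfl
        · have := hstep a b hab
          have : 0 ≤ (2 - ν) / 2 * ‖x (l b) - x (l a)‖ ^ 2 := by positivity
          dsimp only
          linarith
      have hcauchyΦ : CauchySeq fun n => ‖x (l n)‖ ^ 2 + I (x (l n)) :=
        (tendsto_atTop_ciSup hmono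
          ⟨r, by rintro _ ⟨n, rfl⟩; exact (hlt _ (hl n)).le⟩).cauchySeq
      have hcauchy : CauchySeq fun n => x (l n) := by
        rw [Metric.cauchySeq_iff'] at hcauchyΦ ⊢
        intro ε hε
        obtain ⟨N, hN⟩ := hcauchyΦ ((2 - ν) / 2 * ε ^ 2) (by positivity)
        refine ⟨N, fun n hn => ?_⟩
        rcases hn.eq_or_lt with rfl | hn'
        · simpa using hε
        have h₁ := (hstep N n hn').trans_lt ((le_abs_self _).trans_lt (hN n hn))
        rw [dist_eq_norm]
        exact lt_of_pow_lt_pow_left₀ 2 hε.le (lt_of_mul_lt_mul_left h₁ (by positivity))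
      obtain ⟨w, hw⟩ := cauchySeq_tendsto_of_complete hcauchy
      have hΦw : Tendsto (fun n => ‖x (l n)‖ ^ 2 + I (x (l n))) atTop (𝓝 (‖w‖ ^ 2 + I w)) :=
        (hΦc.tendsto w).comp hw
      have hJw : Tendsto (fun n => J (x (l n))) atTop (𝓝 (J w)) := (hJc.tendsto w).comp hw
      have hwr : ‖w‖ ^ 2 + I w ≤ r := le_of_tendsto' hΦw fun n => (hlt _ (hl n)).le
      have hwS : w ∈ S := by
        rw [hS]
        refine ⟨hV.mem_of_tendsto hw (Eventually.of_forall fun n => hxV _ (hl n)), fun v hv => ?_⟩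
        refine le_of_tendsto_of_tendsto' (hΦw.add (hllim.mul hJw))
          ((hllim.mul_const (J v)).const_add (‖v‖ ^ 2 + I v)) fun n => ?_
        have h₁ := hx _ (hl n) v hv
        have h₂ : 0 ≤ (2 - ν - l n * L) / 2 * ‖v - x (l n)‖ ^ 2 :=
          mul_nonneg (by linarith [hadm (hl n).2]) (sq_nonneg _)
        linarith
      exact absurd (hrδ.trans_le (iInf₂_le w hwS)) (not_lt.2 (EReal.coe_le_coe_iff.2 hwr))
    obtain ⟨q, ⟨hq0, hqc⟩, hq⟩ := hreach
    obtain ⟨k, hk, hkr⟩ := intermediate_value_Icc hq0 (hΦc.comp_continuousOn (hcont q hqc))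
      (show r ∈ Icc _ _ from ⟨by simpa [hx0] using hr.le, hq⟩)
    dsimp only [Function.comp_apply] at hkr
    have hkc : 0 ≤ k ∧ k < c := ⟨hk.1, hk.2.trans_lt hqc⟩
    have hkpos : 0 < k := by
      refine hk.1.lt_of_ne ?_
      rintro rfl
      linarith
    have hcoef : 0 < (2 - ν - k * L) / 2 := by linarith [hadm hkc.2]
    refine ⟨x k, ⟨⟨hxV k hkc, hkr⟩, fun u hu => ?_⟩, fun y hy => ?_⟩
    · have h₁ := hx k hkc u hu.1
      have h₂ := mul_nonneg hcoef.le (sq_nonneg ‖u - x k‖)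
      refine le_of_mul_le_mul_left ?_ hkpos
      linarith [hu.2]
    · have h₁ := hx k hkc y hy.1.1
      have h₂ := mul_le_mul_of_nonneg_left (hy.2 (x k) ⟨hxV k hkc, hkr⟩) hkpos.le
      have h₃ : (2 - ν - k * L) / 2 * ‖y - x k‖ ^ 2 ≤ 0 := by linarith [hy.1.2]
      have h₄ : ‖y - x k‖ ^ 2 ≤ 0 := nonpos_of_mul_nonpos_right h₃ hcoef
      exact sub_eq_zero.1 (norm_eq_zero.1 (pow_eq_zero_iff two_ne_zero |>.1
        (le_antisymm h₄ (sq_nonneg _))))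
end

section
/- (Abstract form of Theorem 2.) Let H be a real Hilbert space, V a closed linear subspace of H, and I, J : H → ℝ Fréchet differentiable functionals whose gradients ∇I and ∇J are Lipschitz with constants ν and L respectively, where 0 ≤ ν < 2 and L > 0. Assume I(u) ≥ 0 for all u ∈ H, I(0) = 0, and there exists v₀ ∈ V with ⟨∇J(0), v₀⟩ ≠ 0. Let S be the set of global minima over V of u ↦ ‖u‖² + I(u) + ((2 − ν)/L) J(u), and let S₁ be the set of global minima over V of u ↦ ‖u‖² + I(u) − ((2 − ν)/L) J(u). Then δ₁ := min{ inf_{u ∈ S} (‖u‖² + I(u)), inf_{u ∈ S₁} (‖u‖² + I(u)) } > 0 (with inf ∅ = +∞), and for each real r with 0 < r < δ₁, the restriction of J to the set { u ∈ V : ‖u‖² + I(u) = r } has a unique global minimum and a unique global maximum. -/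
open scoped RealInnerProductSpace
open Filter Topology

section FirstOrder

variable {H : Type*} [NormedAddCommGroup H] [InnerProductSpace ℝ H] [CompleteSpace H]

theorem HasGradientAt.hasDerivAt_comp_add_smul {f : H → ℝ} {g u h : H} {t : ℝ}
    (hf : HasGradientAt f g (u + t • h)) :
    HasDerivAt (fun t : ℝ => f (u + t • h)) ⟪g, h⟫ t := by
  have hline : HasDerivAt (fun t : ℝ => u + t • h) h t := by
    simpa using ((hasDerivAt_id t).smul_const h).const_add u
  exact (hf.hasFDerivAt.comp_hasDerivAt t hline).congr_deriv (by simp)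

/-- Quadratic upper bound for a functional with Lipschitz gradient. -/
theorem sub_sub_inner_le_of_lipschitz_gradient {f : H → ℝ} {f' : H → H} {K : ℝ}
    (hf : ∀ u, HasGradientAt f (f' u) u) (hlip : ∀ u v, ‖f' u - f' v‖ ≤ K * ‖u - v‖) (u h : H) :
    f (u + h) - f u - ⟪f' u, h⟫ ≤ K / 2 * ‖h‖ ^ 2 := by
  have hg : ∀ t : ℝ, HasDerivAt
      (fun t : ℝ => f (u + t • h) - t * ⟪f' u, h⟫ - K / 2 * ‖h‖ ^ 2 * t ^ 2)
      (⟪f' (u + t • h), h⟫ - ⟪f' u, h⟫ - K * ‖h‖ ^ 2 * t) t := fun t => by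
    have h1 := (hf (u + t • h)).hasDerivAt_comp_add_smul
    have h2 := (hasDerivAt_id t).mul_const ⟪f' u, h⟫
    have h3 := (hasDerivAt_pow 2 t).const_mul (K / 2 * ‖h‖ ^ 2)
    refine ((h1.sub h2).sub h3).congr_deriv ?_
    norm_num
    ring
  have hanti : AntitoneOn
      (fun t : ℝ => f (u + t • h) - t * ⟪f' u, h⟫ - K / 2 * ‖h‖ ^ 2 * t ^ 2) (Set.Ici 0) := by
    refine antitoneOn_of_deriv_nonpos (convex_Ici 0)
      (fun t _ => (hg t).continuousAt.continuousWithinAt)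
      (fun t _ => (hg t).differentiableAt.differentiableWithinAt) fun t ht => ?_
    rw [interior_Ici, Set.mem_Ioi] at ht
    rw [(hg t).deriv, ← inner_sub_left]
    have h1 := real_inner_le_norm (f' (u + t • h) - f' u) h
    have h2 := hlip (u + t • h) u
    rw [add_sub_cancel_left, norm_smul, Real.norm_of_nonneg ht.le] at h2
    nlinarith [mul_le_mul_of_nonneg_right h2 (norm_nonneg h)]
  have := hanti (Set.mem_Ici.2 le_rfl) (Set.mem_Ici.2 zero_le_one) zero_le_one
  norm_num at this
  linarith

theorem abs_sub_sub_inner_le_of_lipschitz_gradient {f : H → ℝ} {f' : H → H} {K : ℝ}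
    (hf : ∀ u, HasGradientAt f (f' u) u) (hlip : ∀ u v, ‖f' u - f' v‖ ≤ K * ‖u - v‖) (u h : H) :
    |f (u + h) - f u - ⟪f' u, h⟫| ≤ K / 2 * ‖h‖ ^ 2 := by
  have h1 := sub_sub_inner_le_of_lipschitz_gradient hf hlip u h
  have h2 := sub_sub_inner_le_of_lipschitz_gradient (f := fun x => -f x) (f' := fun x => -f' x)
    (K := K) (fun x => by
      rw [hasGradientAt_iff_hasFDerivAt, map_neg]; exact (hf x).hasFDerivAt.neg)
    (fun x y => by rw [neg_sub_neg, norm_sub_rev]; exact hlip x y) u h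
  rw [inner_neg_left] at h2
  exact abs_le.2 ⟨by linarith, h1⟩

theorem abs_midpoint_sub_le_of_lipschitz_gradient {f : H → ℝ} {f' : H → H} {K : ℝ}
    (hf : ∀ u, HasGradientAt f (f' u) u) (hlip : ∀ u v, ‖f' u - f' v‖ ≤ K * ‖u - v‖) (u v : H) :
    |(f u + f v) / 2 - f ((2⁻¹ : ℝ) • (u + v))| ≤ K / 8 * ‖u - v‖ ^ 2 := by
  set w := (2⁻¹ : ℝ) • (u + v) with hw
  set h := (2⁻¹ : ℝ) • (u - v) with hh
  have hu : w + h = u := by rw [hw, hh]; module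
  have hv : w + -h = v := by rw [hw, hh]; module
  have h1 := abs_le.1 (abs_sub_sub_inner_le_of_lipschitz_gradient hf hlip w h)
  have h2 := abs_le.1 (abs_sub_sub_inner_le_of_lipschitz_gradient hf hlip w (-h))
  rw [hu] at h1
  rw [hv, inner_neg_right, norm_neg] at h2
  have hn : ‖h‖ ^ 2 = ‖u - v‖ ^ 2 / 4 := by
    rw [hh, norm_smul, mul_pow]; norm_num; ring
  rw [hn] at h1 h2
  exact abs_le.2 ⟨by linarith [h1.1, h2.1], by linarith [h1.2, h2.2]⟩

theorem abs_sub_le_of_lipschitz_gradient {f : H → ℝ} {f' : H → H} {K : ℝ}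
    (hf : ∀ u, HasGradientAt f (f' u) u) (hlip : ∀ u v, ‖f' u - f' v‖ ≤ K * ‖u - v‖) (u v : H) :
    |f v - f u| ≤ ‖f' u‖ * ‖v - u‖ + K / 2 * ‖v - u‖ ^ 2 := by
  have h1 := abs_le.1 (abs_sub_sub_inner_le_of_lipschitz_gradient hf hlip u (v - u))
  have h2 := abs_le.1 (abs_real_inner_le_norm (f' u) (v - u))
  rw [add_sub_cancel] at h1
  exact abs_le.2 ⟨by linarith [h1.1, h2.1], by linarith [h1.2, h2.2]⟩

/-- A critical point condition tested against the direction `v₀` keeps minimizers of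
`‖u‖² + I u + a J u` away from the origin. -/
theorem exists_pos_le_norm_sq_of_isMinOn {V : Submodule ℝ H} {I J : H → ℝ} {I' J' : H → H}
    {ν L a : ℝ} (hIgrad : ∀ u, HasGradientAt I (I' u) u) (hJgrad : ∀ u, HasGradientAt J (J' u) u)
    (hIlip : ∀ u v, ‖I' u - I' v‖ ≤ ν * ‖u - v‖) (hJlip : ∀ u v, ‖J' u - J' v‖ ≤ L * ‖u - v‖)
    (hInonneg : ∀ u, 0 ≤ I u) (hI0 : I 0 = 0) (ha : a ≠ 0)
    {v₀ : H} (hv₀V : v₀ ∈ V) (hv₀ : ⟪J' 0, v₀⟫ ≠ 0) :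
    ∃ ε > 0, ∀ u ∈ V, (∀ v ∈ V, ‖u‖ ^ 2 + I u + a * J u ≤ ‖v‖ ^ 2 + I v + a * J v) →
      ε ≤ ‖u‖ ^ 2 := by
  have hI'0 : I' 0 = 0 := by
    have hmin : IsLocalMin I 0 := Eventually.of_forall fun u => by
      rw [hI0]; exact hInonneg u
    have := hmin.hasFDerivAt_eq_zero (hIgrad 0).hasFDerivAt
    simpa using this
  set M := (2 + |ν| + |a| * |L|) * ‖v₀‖ with hM
  have hM0 : 0 ≤ M := by positivity
  set k := |a| * |⟪J' 0, v₀⟫| with hk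
  have hk0 : 0 < k := by positivity
  refine ⟨(k / (M + 1)) ^ 2, by positivity, fun u hu hmin => ?_⟩
  have hcrit : 2 * ⟪u, v₀⟫ + ⟪I' u, v₀⟫ + a * ⟪J' u, v₀⟫ = 0 := by
    have hline : HasDerivAt (fun t : ℝ => u + t • v₀) v₀ 0 := by
      simpa using ((hasDerivAt_id (0 : ℝ)).smul_const v₀).const_add u
    have hcomp : ∀ {f : H → ℝ} {g : H}, HasGradientAt f g u →
        HasDerivAt (fun t : ℝ => f (u + t • v₀)) ⟪g, v₀⟫ 0 := fun {f g} hf =>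
      HasGradientAt.hasDerivAt_comp_add_smul (by simpa using hf)
    have hd := ((hline.norm_sq).add (hcomp (hIgrad u))).add ((hcomp (hJgrad u)).const_mul a)
    have hloc : IsLocalMin
        (fun t : ℝ => ‖u + t • v₀‖ ^ 2 + I (u + t • v₀) + a * J (u + t • v₀)) 0 :=
      Eventually.of_forall fun t => by
        simpa using hmin (u + t • v₀) (V.add_mem hu (V.smul_mem t hv₀V))
    simpa using hloc.hasDerivAt_eq_zero hd
  have hI := hIlip u 0
  have hJ := hJlip u 0
  rw [sub_zero] at hI hJ
  rw [hI'0, sub_zero] at hI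
  have e1 := abs_real_inner_le_norm u v₀
  have e2 := abs_real_inner_le_norm (I' u) v₀
  have e3 := abs_real_inner_le_norm (J' u - J' 0) v₀
  rw [inner_sub_left] at e3
  have hn := norm_nonneg v₀
  have hun := norm_nonneg u
  have e2' : |⟪I' u, v₀⟫| ≤ |ν| * ‖u‖ * ‖v₀‖ :=
    e2.trans (by gcongr; exact hI.trans (by gcongr; exact le_abs_self ν))
  have e3' : |⟪J' u, v₀⟫ - ⟪J' 0, v₀⟫| ≤ |L| * ‖u‖ * ‖v₀‖ :=
    e3.trans (by gcongr; exact hJ.trans (by gcongr; exact le_abs_self L))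
  have hkM : k ≤ M * ‖u‖ := by
    have heq : a * ⟪J' 0, v₀⟫ =
        -(2 * ⟪u, v₀⟫) + -⟪I' u, v₀⟫ + -(a * (⟪J' u, v₀⟫ - ⟪J' 0, v₀⟫)) := by linarith
    calc k = |a * ⟪J' 0, v₀⟫| := (abs_mul _ _).symm
      _ ≤ |2 * ⟪u, v₀⟫| + |⟪I' u, v₀⟫| + |a * (⟪J' u, v₀⟫ - ⟪J' 0, v₀⟫)| := by
        rw [heq]
        refine (abs_add_three _ _ _).trans ?_
        simp only [abs_neg, le_refl]
      _ = 2 * |⟪u, v₀⟫| + |⟪I' u, v₀⟫| + |a| * |⟪J' u, v₀⟫ - ⟪J' 0, v₀⟫| := by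
        rw [abs_mul, abs_mul, abs_two]
      _ ≤ 2 * (‖u‖ * ‖v₀‖) + |ν| * ‖u‖ * ‖v₀‖ + |a| * (|L| * ‖u‖ * ‖v₀‖) := by gcongr
      _ = M * ‖u‖ := by rw [hM]; ring
  have : k / (M + 1) ≤ ‖u‖ := by
    rw [div_le_iff₀ (by positivity)]
    nlinarith
  gcongr

end FirstOrder

section Minimizers

variable {E : Type*} [NormedAddCommGroup E]

theorem cauchySeq_of_norm_sub_sq_le {u : ℕ → E} {b : ℕ → ℝ} (hb : Tendsto b atTop (𝓝 0))
    (h : ∀ n m, n ≤ m → ‖u n - u m‖ ^ 2 ≤ b n) : CauchySeq u := by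
  refine cauchySeq_of_le_tendsto_0' (fun n => √(b n)) (fun n m hnm => ?_) ?_
  · rw [dist_eq_norm]
    exact Real.le_sqrt_of_sq_le (h n m hnm)
  · simpa using hb.sqrt

variable [NormedSpace ℝ E]

theorem Submodule.half_smul_add_mem {V : Submodule ℝ E} {u v : E} (hu : u ∈ V) (hv : v ∈ V) :
    (2⁻¹ : ℝ) • (u + v) ∈ V :=
  V.smul_mem _ (V.add_mem hu hv)

/-- A continuous, bounded below, uniformly midpoint convex function attains its minimum on a closed
subspace. -/
theorem exists_isMinOn_of_midpoint_convex [CompleteSpace E] {V : Submodule ℝ E}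
    (hV : IsClosed (V : Set E)) {F : E → ℝ} (hF : Continuous F) {c B : ℝ} (hc : 0 < c)
    (hB : ∀ u ∈ V, B ≤ F u)
    (hmid : ∀ u v, F ((2⁻¹ : ℝ) • (u + v)) + c / 8 * ‖u - v‖ ^ 2 ≤ (F u + F v) / 2) :
    ∃ u ∈ V, ∀ v ∈ V, F u ≤ F v := by
  have hne : (F '' V).Nonempty := ⟨F 0, 0, V.zero_mem, rfl⟩
  have hbdd : BddBelow (F '' V) := ⟨B, by rintro _ ⟨u, hu, rfl⟩; exact hB u hu⟩
  set i := sInf (F '' V)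
  have hi : ∀ v ∈ V, i ≤ F v := fun v hv => csInf_le hbdd ⟨v, hv, rfl⟩
  have hex : ∀ n : ℕ, ∃ u ∈ V, F u < i + 1 / ((n : ℝ) + 1) := fun n => by
    obtain ⟨_, ⟨u, hu, rfl⟩, h⟩ := exists_lt_of_csInf_lt hne
      (lt_add_of_pos_right i (Nat.one_div_pos_of_nat (α := ℝ) (n := n)))
    exact ⟨u, hu, h⟩
  choose u huV hu using hex
  have hlim := tendsto_one_div_add_atTop_nhds_zero_nat (𝕜 := ℝ)
  have hcauchy : CauchySeq u := by
    refine cauchySeq_of_norm_sub_sq_le (b := fun n => 8 / c * (1 / ((n : ℝ) + 1)))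
      (by simpa using hlim.const_mul (8 / c)) fun n m hnm => ?_
    have h1 := hmid (u n) (u m)
    have h2 := hi _ (Submodule.half_smul_add_mem (huV n) (huV m))
    have h3 := Nat.one_div_le_one_div (α := ℝ) hnm
    rw [div_mul_eq_mul_div, le_div_iff₀ hc]
    linarith [hu n, hu m]
  obtain ⟨x, hx⟩ := cauchySeq_tendsto_of_complete hcauchy
  refine ⟨x, hV.mem_of_tendsto hx (Eventually.of_forall huV), fun v hv => le_trans ?_ (hi v hv)⟩
  have h1 : Tendsto (fun n : ℕ => i + 1 / ((n : ℝ) + 1)) atTop (𝓝 i) := by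
    simpa using hlim.const_add i
  exact le_of_tendsto_of_tendsto' ((hF.tendsto x).comp hx) h1 fun n => (hu n).le

/-- Quadratic growth at a minimizer. -/
theorem quadratic_growth_of_midpoint_convex {V : Submodule ℝ E} {F : E → ℝ} {c : ℝ}
    (hmid : ∀ u v, F ((2⁻¹ : ℝ) • (u + v)) + c / 8 * ‖u - v‖ ^ 2 ≤ (F u + F v) / 2)
    {u v : E} (hu : u ∈ V) (hmin : ∀ w ∈ V, F u ≤ F w) (hv : v ∈ V) :
    F u + c / 4 * ‖u - v‖ ^ 2 ≤ F v := by
  linarith [hmid u v, hmin _ (Submodule.half_smul_add_mem hu hv)]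

theorem existsUnique_isMinOn_level [CompleteSpace E] {V : Submodule ℝ E}
    (hV : IsClosed (V : Set E)) {Φ J : E → ℝ} {m L r : ℝ} (hΦ : Continuous Φ) (hJ : Continuous J)
    (hm : 0 < m) (hm2 : m ≤ 2) (hL : 0 < L)
    (hΦmid : ∀ u v, Φ ((2⁻¹ : ℝ) • (u + v)) + m / 8 * ‖u - v‖ ^ 2 ≤ (Φ u + Φ v) / 2)
    (hJmid : ∀ u v, |(J u + J v) / 2 - J ((2⁻¹ : ℝ) • (u + v))| ≤ L / 8 * ‖u - v‖ ^ 2)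
    (hJloc : ∀ u, ∃ C, 0 ≤ C ∧ ∀ v, |J v - J u| ≤ C * ‖v - u‖ + L / 2 * ‖v - u‖ ^ 2)
    (hΦnorm : ∀ u, ‖u‖ ^ 2 ≤ Φ u) (hΦ0 : Φ 0 = 0) (hr : 0 < r)
    (hcrit : ∀ u ∈ V, (∀ v ∈ V, Φ u + m / L * J u ≤ Φ v + m / L * J v) → r < Φ u) :
    ∃! u : E, (u ∈ V ∧ Φ u = r) ∧ ∀ v, v ∈ V ∧ Φ v = r → J u ≤ J v := by
  set l := m / L with hl
  have hl0 : 0 < l := by positivity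
  have hlL : l * L = m := by rw [hl]; field_simp
  have hFmid : ∀ t, 0 ≤ t → ∀ u v, (Φ ((2⁻¹ : ℝ) • (u + v)) + t * J ((2⁻¹ : ℝ) • (u + v)))
      + (m - t * L) / 8 * ‖u - v‖ ^ 2 ≤ ((Φ u + t * J u) + (Φ v + t * J v)) / 2 := by
    intro t ht u v
    have h1 := hΦmid u v
    have h2 := mul_le_mul_of_nonneg_left (abs_le.1 (hJmid u v)).1 ht
    linarith
  have hpos : ∀ t, t < l → 0 < m - t * L := fun t ht => by
    rw [← hlL, sub_pos]; gcongr
  have hex : ∀ t, ∃ u, 0 ≤ t → t < l →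
      u ∈ V ∧ ∀ v ∈ V, Φ u + t * J u ≤ Φ v + t * J v := by
    intro t
    by_cases ht : 0 ≤ t ∧ t < l
    · obtain ⟨C, hC, hC'⟩ := hJloc 0
      have hq : 0 < 2 - t * L := by linarith [hpos t ht.2]
      obtain ⟨u, hu⟩ := exists_isMinOn_of_midpoint_convex hV (F := fun u => Φ u + t * J u)
        (by fun_prop) (B := t * J 0 - (t * C) ^ 2 / (2 * (2 - t * L))) (hpos t ht.2)
        (fun u _ => by
          have h1 := hC' u
          rw [sub_zero] at h1
          have h2 := mul_le_mul_of_nonneg_left (abs_le.1 h1).1 ht.1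
          have h3 := hΦnorm u
          have h4 : t * C * ‖u‖ - (2 - t * L) / 2 * ‖u‖ ^ 2 ≤ (t * C) ^ 2 / (2 * (2 - t * L)) := by
            rw [le_div_iff₀ (by positivity)]
            nlinarith [sq_nonneg (t * C - (2 - t * L) * ‖u‖)]
          linarith)
        (hFmid t ht.1)
      exact ⟨u, fun _ _ => hu⟩
    · exact ⟨0, fun h1 h2 => absurd ⟨h1, h2⟩ ht⟩
  choose x hx using hex
  have hgrow : ∀ t, 0 ≤ t → t < l → ∀ v ∈ V,
      Φ (x t) + t * J (x t) + (m - t * L) / 4 * ‖x t - v‖ ^ 2 ≤ Φ v + t * J v :=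
    fun t h0 h1 v hv => quadratic_growth_of_midpoint_convex (F := fun u => Φ u + t * J u)
      (hFmid t h0) (hx t h0 h1).1 (hx t h0 h1).2 hv
  have hx0 : x 0 = 0 := by
    have h1 := (hx 0 le_rfl hl0).2 0 V.zero_mem
    have h2 := hΦnorm (x 0)
    simp only [zero_mul, add_zero, hΦ0] at h1
    have h3 := pow_eq_zero_iff two_ne_zero |>.1 (le_antisymm (h2.trans h1) (by positivity))
    exact norm_eq_zero.1 h3
  have hcont : ContinuousOn x (Set.Ico 0 l) := by
    intro s hs
    obtain ⟨C, hC, hC'⟩ := hJloc (x s)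
    have hc := hpos s hs.2
    set c := m - s * L with hcdef
    have hkey : ∀ᶠ t in 𝓝[Set.Ico 0 l] s, dist (x t) (x s) ≤ |t - s| * (4 * C / c) := by
      have hnear : ∀ᶠ t in 𝓝[Set.Ico 0 l] s, |t - s| * (3 * L) < c := by
        refine mem_nhdsWithin_of_mem_nhds ?_
        have hcts : Continuous fun t : ℝ => |t - s| * (3 * L) := by fun_prop
        exact hcts.tendsto s |>.eventually_lt_const (by simpa using hc)
      filter_upwards [hnear, self_mem_nhdsWithin] with t ht htI
      have g1 := hgrow t htI.1 htI.2 (x s) (hx s hs.1 hs.2).1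
      have g2 := hgrow s hs.1 hs.2 (x t) (hx t htI.1 htI.2).1
      rw [norm_sub_rev] at g2
      rw [dist_eq_norm]
      set d := ‖x t - x s‖ with hd
      have hd0 : 0 ≤ d := norm_nonneg _
      rcases hd0.eq_or_lt with hd0' | hd0'
      · rw [← hd0']; positivity
      have g3 : (m - t * L + c) / 4 * d ^ 2 ≤ |t - s| * (C * d + L / 2 * d ^ 2) := by
        calc (m - t * L + c) / 4 * d ^ 2 ≤ -((t - s) * (J (x t) - J (x s))) := by linarith
          _ ≤ |t - s| * |J (x t) - J (x s)| := by rw [← abs_mul]; exact neg_le_abs _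
          _ ≤ _ := by gcongr; exact hC' _
      have g4 : (m - t * L + c) / 4 * d ≤ |t - s| * (C + L / 2 * d) := by
        refine le_of_mul_le_mul_right ?_ hd0'
        linarith
      have g5 : m - t * L ≥ c - |t - s| * L := by
        have := mul_le_mul_of_nonneg_right (le_abs_self (t - s)) hL.le
        linarith
      rw [← mul_div_assoc, le_div_iff₀ hc]
      nlinarith
    refine tendsto_iff_dist_tendsto_zero.2
      (squeeze_zero' (Eventually.of_forall fun _ => dist_nonneg) hkey ?_)
    have hcts : Continuous fun t : ℝ => |t - s| * (4 * C / c) := by fun_prop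
    have := (hcts.tendsto s).mono_left (nhdsWithin_le_nhds (s := Set.Ico 0 l))
    simpa using this
  have hreach : ∃ t, 0 ≤ t ∧ t < l ∧ r ≤ Φ (x t) := by
    by_contra! hlt
    have hpair : ∀ s t, 0 ≤ s → s ≤ t → t < l →
        Φ (x s) ≤ Φ (x t) ∧ L * t / 4 * ‖x s - x t‖ ^ 2 ≤ Φ (x t) - Φ (x s) := by
      intro s t hs hst ht
      rcases hst.eq_or_lt with rfl | hst
      · simp
      have g1 := hgrow s hs (hst.trans ht) (x t) (hx t (hs.trans hst.le) ht).1
      have g2 := (hx t (hs.trans hst.le) ht).2 (x s) (hx s hs (hst.trans ht)).1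
      have hms : (t - s) * L ≤ m - s * L := by
        have := hpos t ht
        linarith
      have hts : 0 < t - s := sub_pos.2 hst
      have ht0 : 0 ≤ t := hs.trans hst.le
      set q := ‖x s - x t‖ ^ 2
      have hq : 0 ≤ q := by positivity
      have g3 : (t - s) * L / 4 * q ≤ (m - s * L) / 4 * q := by gcongr
      have g4 : L * t / 4 * q ≤ Φ (x t) - Φ (x s) := by
        refine le_of_mul_le_mul_left ?_ hts
        nlinarith [mul_le_mul_of_nonneg_left g2 hs,
          mul_le_mul_of_nonneg_left (add_le_add g1 g3) ht0]
      have : 0 ≤ L * t / 4 * q := by positivity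
      exact ⟨by linarith, g4⟩
    set τ : ℕ → ℝ := fun n => l * (1 - 1 / ((n : ℝ) + 1) / 2) with hτ
    have hτlt : ∀ n, τ n < l := fun n => by
      have h1 := Nat.one_div_pos_of_nat (α := ℝ) (n := n)
      simp only [hτ]
      nlinarith
    have hτge : ∀ n, l / 2 ≤ τ n := fun n => by
      have h1 := Nat.one_div_le_one_div (α := ℝ) (Nat.zero_le n)
      simp only [hτ]
      norm_num at h1 ⊢
      nlinarith
    have hτ0 : ∀ n, 0 ≤ τ n := fun n => le_trans (by positivity) (hτge n)
    have hτmono : Monotone τ := fun n k hnk => by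
      have h1 := Nat.one_div_le_one_div (α := ℝ) hnk
      simp only [hτ]
      gcongr
    have hτlim : Tendsto τ atTop (𝓝 l) := by
      have := ((tendsto_one_div_add_atTop_nhds_zero_nat (𝕜 := ℝ)).div_const 2).const_sub 1
        |>.const_mul l
      simpa [hτ] using this
    have hΦmono : Monotone fun n => Φ (x (τ n)) := fun n k hnk =>
      (hpair _ _ (hτ0 n) (hτmono hnk) (hτlt k)).1
    have hΦbdd : BddAbove (Set.range fun n => Φ (x (τ n))) :=
      ⟨r, by rintro _ ⟨n, rfl⟩; exact (hlt _ (hτ0 n) (hτlt n)).le⟩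
    have hΦlim := tendsto_atTop_ciSup hΦmono hΦbdd
    set p := ⨆ n, Φ (x (τ n))
    have hcauchy : CauchySeq fun n => x (τ n) := by
      refine cauchySeq_of_norm_sub_sq_le (b := fun n => 8 / m * (p - Φ (x (τ n)))) ?_ ?_
      · simpa using (hΦlim.const_sub p).const_mul (8 / m)
      · intro n k hnk
        have h1 := (hpair _ _ (hτ0 n) (hτmono hnk) (hτlt k)).2
        have h2 : Φ (x (τ k)) ≤ p := le_ciSup hΦbdd k
        have h3 : m / 2 ≤ L * τ k := by
          have := mul_le_mul_of_nonneg_left (hτge k) hL.le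
          linarith
        rw [div_mul_eq_mul_div, le_div_iff₀ hm]
        nlinarith [sq_nonneg ‖x (τ n) - x (τ k)‖]
    obtain ⟨y, hy⟩ := cauchySeq_tendsto_of_complete hcauchy
    have hΦy := (hΦ.tendsto y).comp hy
    have hJy := (hJ.tendsto y).comp hy
    have hyV : y ∈ V := hV.mem_of_tendsto hy
      (Eventually.of_forall fun n => (hx _ (hτ0 n) (hτlt n)).1)
    refine absurd (hcrit y hyV fun v hv => ?_) (not_lt.2 ?_)
    · exact le_of_tendsto_of_tendsto' (hΦy.add (hτlim.mul hJy))
        ((hτlim.mul_const (J v)).const_add (Φ v)) fun n => (hx _ (hτ0 n) (hτlt n)).2 v hv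
    · exact le_of_tendsto' hΦy fun n => (hlt _ (hτ0 n) (hτlt n)).le
  obtain ⟨T, hT0, hTl, hT⟩ := hreach
  obtain ⟨t, ht, htr⟩ : r ∈ (fun t => Φ (x t)) '' Set.Icc 0 T :=
    intermediate_value_Icc hT0
      (hΦ.comp_continuousOn (hcont.mono fun t ht => ⟨ht.1, ht.2.trans_lt hTl⟩))
      ⟨by simpa [hx0, hΦ0] using hr.le, hT⟩
  have htl : t < l := ht.2.trans_lt hTl
  have ht0 : 0 < t := by
    refine lt_of_le_of_ne ht.1 ?_
    rintro rfl
    simp only [hx0, hΦ0] at htr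
    exact hr.ne htr
  have hxt := hx t ht.1 htl
  simp only at htr
  refine ⟨x t, ⟨⟨hxt.1, htr⟩, fun v hv => ?_⟩, fun y hy => ?_⟩
  · have := hxt.2 v hv.1
    rw [htr, hv.2] at this
    exact le_of_mul_le_mul_left (by linarith) ht0
  · have h1 := hgrow t ht.1 htl y hy.1.1
    have h2 := mul_le_mul_of_nonneg_left (hy.2 (x t) ⟨hxt.1, htr⟩) ht0.le
    rw [htr, hy.1.2] at h1
    have hq : 0 < (m - t * L) / 4 := by linarith [hpos t htl]
    have h3 : ‖x t - y‖ ^ 2 ≤ 0 := by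
      by_contra! h
      nlinarith [mul_pos hq h]
    have h4 := pow_eq_zero_iff two_ne_zero |>.1 (le_antisymm h3 (by positivity))
    exact (sub_eq_zero.1 (norm_eq_zero.1 h4)).symm

end Minimizers

theorem abstract_theorem_two
    {H : Type*} [NormedAddCommGroup H] [InnerProductSpace ℝ H] [CompleteSpace H]
    (V : Submodule ℝ H) (hV : IsClosed (V : Set H))
    (I J : H → ℝ) (I' J' : H → H) (ν L : ℝ)
    (hν₀ : 0 ≤ ν) (hν₂ : ν < 2) (hL : 0 < L)
    (hIgrad : ∀ u, HasGradientAt I (I' u) u)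
    (hJgrad : ∀ u, HasGradientAt J (J' u) u)
    (hIlip : ∀ u v, ‖I' u - I' v‖ ≤ ν * ‖u - v‖)
    (hJlip : ∀ u v, ‖J' u - J' v‖ ≤ L * ‖u - v‖)
    (hInonneg : ∀ u, 0 ≤ I u) (hI0 : I 0 = 0)
    (v₀ : H) (hv₀V : v₀ ∈ V) (hv₀ : ⟪J' 0, v₀⟫ ≠ 0)
    (S S₁ : Set H)
    (hS : S = {u : H | u ∈ V ∧ ∀ v ∈ V,
      ‖u‖ ^ 2 + I u + ((2 - ν) / L) * J u ≤ ‖v‖ ^ 2 + I v + ((2 - ν) / L) * J v})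
    (hS₁ : S₁ = {u : H | u ∈ V ∧ ∀ v ∈ V,
      ‖u‖ ^ 2 + I u - ((2 - ν) / L) * J u ≤ ‖v‖ ^ 2 + I v - ((2 - ν) / L) * J v})
    (δ₁ : EReal)
    (hδ₁ : δ₁ = min (⨅ u ∈ S, ((‖u‖ ^ 2 + I u : ℝ) : EReal))
                    (⨅ u ∈ S₁, ((‖u‖ ^ 2 + I u : ℝ) : EReal))) :
    (0 : EReal) < δ₁ ∧
    ∀ r : ℝ, 0 < r → (r : EReal) < δ₁ →
      (∃! ustar : H, (ustar ∈ V ∧ ‖ustar‖ ^ 2 + I ustar = r) ∧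
        ∀ u, u ∈ V ∧ ‖u‖ ^ 2 + I u = r → J ustar ≤ J u) ∧
      (∃! wstar : H, (wstar ∈ V ∧ ‖wstar‖ ^ 2 + I wstar = r) ∧
        ∀ u, u ∈ V ∧ ‖u‖ ^ 2 + I u = r → J u ≤ J wstar) := by
  have ha : (2 - ν) / L ≠ 0 := (div_pos (by linarith) hL).ne'
  have hpos : ∀ a : ℝ, a ≠ 0 → ∀ T : Set H, (∀ u ∈ T, u ∈ V ∧ ∀ v ∈ V,
      ‖u‖ ^ 2 + I u + a * J u ≤ ‖v‖ ^ 2 + I v + a * J v) →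
      (0 : EReal) < ⨅ u ∈ T, ((‖u‖ ^ 2 + I u : ℝ) : EReal) := by
    intro a ha T hT
    obtain ⟨ε, hε, h⟩ := exists_pos_le_norm_sq_of_isMinOn hIgrad hJgrad hIlip hJlip
      hInonneg hI0 ha hv₀V hv₀
    refine lt_of_lt_of_le (EReal.coe_pos.2 hε) (le_iInf₂ fun u hu => ?_)
    have := h u (hT u hu).1 (hT u hu).2
    exact EReal.coe_le_coe_iff.2 (by linarith [hInonneg u])
  have hIc : Continuous I := continuous_iff_continuousAt.2 fun u => (hIgrad u).continuousAt
  have hJc : Continuous J := continuous_iff_continuousAt.2 fun u => (hJgrad u).continuousAt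
  have hΦmid : ∀ u v : H, (‖(2⁻¹ : ℝ) • (u + v)‖ ^ 2 + I ((2⁻¹ : ℝ) • (u + v)))
      + (2 - ν) / 8 * ‖u - v‖ ^ 2 ≤ ((‖u‖ ^ 2 + I u) + (‖v‖ ^ 2 + I v)) / 2 := by
    intro u v
    have h1 := (abs_le.1 (abs_midpoint_sub_le_of_lipschitz_gradient hIgrad hIlip u v)).1
    have h2 := parallelogram_law_with_norm ℝ u v
    have h3 : ‖(2⁻¹ : ℝ) • (u + v)‖ ^ 2 = ‖u + v‖ ^ 2 / 4 := by
      rw [norm_smul, mul_pow]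
      norm_num
      ring
    rw [h3]
    linarith
  have hJmid := abs_midpoint_sub_le_of_lipschitz_gradient hJgrad hJlip
  have hJloc := abs_sub_le_of_lipschitz_gradient hJgrad hJlip
  refine ⟨?_, fun r hr hrδ => ⟨?_, ?_⟩⟩
  · rw [hδ₁, lt_min_iff]
    refine ⟨hpos _ ha S fun u hu => by rwa [hS] at hu,
      hpos (-((2 - ν) / L)) (neg_ne_zero.2 ha) S₁ fun u hu => ?_⟩
    rw [hS₁] at hu
    simpa only [neg_mul, ← sub_eq_add_neg, Set.mem_ofPred_eq] using hu
  · refine existsUnique_isMinOn_level hV (Φ := fun u => ‖u‖ ^ 2 + I u) (by fun_prop) hJc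
      (sub_pos.2 hν₂) (by linarith) hL hΦmid hJmid (fun u => ⟨_, norm_nonneg _, hJloc u⟩)
      (fun u => by linarith [hInonneg u]) (by simp [hI0]) hr fun u hu hmin => ?_
    have huS : u ∈ S := by rw [hS]; exact ⟨hu, hmin⟩
    rw [hδ₁] at hrδ
    exact EReal.coe_lt_coe_iff.1 ((hrδ.trans_le (min_le_left _ _)).trans_le (iInf₂_le u huS))
  · have := existsUnique_isMinOn_level hV (Φ := fun u => ‖u‖ ^ 2 + I u) (J := fun u => -J u)
      (r := r) (by fun_prop) hJc.neg (sub_pos.2 hν₂) (by linarith) hL hΦmid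
      (fun u v => by
        have h := hJmid u v
        rw [← abs_neg] at h
        convert h using 2
        ring)
      (fun u => ⟨_, norm_nonneg _, fun v => by
        have h := hJloc u v
        rw [← abs_neg] at h
        convert h using 2
        ring⟩)
      (fun u => by linarith [hInonneg u]) (by simp [hI0]) hr (fun u hu hmin => by
        have huS : u ∈ S₁ := by
          rw [hS₁]
          refine ⟨hu, fun v hv => ?_⟩
          simpa only [mul_neg, ← sub_eq_add_neg] using hmin v hv
        rw [hδ₁] at hrδ
        exact EReal.coe_lt_coe_iff.1
          ((hrδ.trans_le (min_le_right _ _)).trans_le (iInf₂_le u huS)))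
    simpa only [neg_le_neg_iff] using this
end
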